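/- arXiv:1906.00523 — 2 statements merged into one kernel-verified Lean document; each statement's English description precedes it below -/
import Mathlib

section
/- Let (γ₁,γ₂) be an admissible pair of regular curves in S², both closed with periods l₁, l₂ > 0, with lifts c₁, c₂, and suppose c₁(s+l₁) = −c₁(s) for all s ∈ ℝ. Then f_{γ₁,γ₂}(s₁+l₁, s₂) = −f_{γ₁,γ₂}(s₁,s₂) for all (s₁,s₂) ∈ ℝ²; in particular the image of f_{γ₁,γ₂} in S³ contains pairs of antipodal points, and its extrinsic diameter equals π. -/
noncomputable section

open Matrix

/-- Euclidean 3-space (as triples of reals). -/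
abbrev R3 : Type := Fin 3 → ℝ

/-- The Euclidean inner product on ℝ³. -/
def dot3 (a b : R3) : ℝ := a 0 * b 0 + a 1 * b 1 + a 2 * b 2

/-- The Euclidean norm on ℝ³. -/
def norm3 (a : R3) : ℝ := Real.sqrt (dot3 a a)

/-- The cross product on ℝ³. -/
def cross3 (a b : R3) : R3 :=
  ![a 1 * b 2 - a 2 * b 1, a 2 * b 0 - a 0 * b 2, a 0 * b 1 - a 1 * b 0]

/-- The determinant of three vectors in ℝ³. -/
def det3 (a b c : R3) : ℝ := dot3 a (cross3 b c)

/-- `γ : ℝ → ℝ³` is a regular curve in the unit sphere S²: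
it is smooth, takes values in S², and has nowhere-vanishing derivative. -/
structure IsRegularCurve (γ : ℝ → R3) : Prop where
  smooth : ContDiff ℝ (⊤ : ℕ∞) γ
  sphere : ∀ s, dot3 (γ s) (γ s) = 1
  reg : ∀ s, deriv γ s ≠ 0

/-- The geodesic curvature `κ(s) = det(γ, γ', γ'')/|γ'|³` of a curve in S². -/
def kappa (γ : ℝ → R3) (s : ℝ) : ℝ :=
  det3 (γ s) (deriv γ s) (deriv (deriv γ) s) / norm3 (deriv γ s) ^ 3

/-- The unit normal `n(s) = (γ × γ')/|γ'|` of a curve in S². -/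
def unitNormal (γ : ℝ → R3) (s : ℝ) : R3 :=
  (norm3 (deriv γ s))⁻¹ • cross3 (γ s) (deriv γ s)

/-- `γ` is closed of period `l > 0`. -/
def HasPeriod (γ : ℝ → R3) (l : ℝ) : Prop := 0 < l ∧ ∀ s, γ (s + l) = γ s

/-- 2×2 complex matrices. -/
abbrev Mat2 := Matrix (Fin 2) (Fin 2) ℂ

def E1 : Mat2 := !![0, Complex.I; Complex.I, 0]
def E2 : Mat2 := !![0, -1; 1, 0]
def E3 : Mat2 := !![Complex.I, 0; 0, -Complex.I]

/-- The identification of ℝ³ with su(2) via the orthonormal basis e₁, e₂, e₃. -/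
def toSu2 (v : R3) : Mat2 := (v 0 : ℂ) • E1 + (v 1 : ℂ) • E2 + (v 2 : ℂ) • E3

/-- The adjoint action `Ad(a)x = a x a⁻¹`. -/
def AdM (a x : Mat2) : Mat2 := a * x * a⁻¹

/-- `c : ℝ → SU(2)` is a lift of the regular curve `γ` in S²:
it is smooth (entrywise), takes values in SU(2), and satisfies
`Ad(c(s))e₃ = γ(s)` and `Ad(c(s))e₁ = γ'(s)/|γ'(s)|` under `toSu2`. -/
structure IsLift (γ : ℝ → R3) (c : ℝ → Mat2) : Prop where
  mem : ∀ s, c s ∈ Matrix.specialUnitaryGroup (Fin 2) ℂ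
  smooth : ∀ i j, ContDiff ℝ (⊤ : ℕ∞) fun s => c s i j
  ad3 : ∀ s, AdM (c s) E3 = toSu2 (γ s)
  ad1 : ∀ s, AdM (c s) E1 = toSu2 ((norm3 (deriv γ s))⁻¹ • deriv γ s)

/-- The entrywise derivative of a matrix-valued curve. -/
def matDeriv (c : ℝ → Mat2) (s : ℝ) : Mat2 :=
  Matrix.of fun i j => deriv (fun t => c t i j) s

/-- The map `f_{γ₁,γ₂}(s₁,s₂) = c₁(0)⁻¹ c₁(s₁) c₂(s₂)⁻¹ c₂(0)` associated to lifts `c₁, c₂`. -/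
def fmap (c1 c2 : ℝ → Mat2) (s1 s2 : ℝ) : Mat2 :=
  (c1 0)⁻¹ * c1 s1 * (c2 s2)⁻¹ * c2 0

/-- `(γ₁, γ₂)` is an admissible pair. -/
structure IsAdmissiblePair (γ1 γ2 : ℝ → R3) : Prop where
  reg1 : IsRegularCurve γ1
  reg2 : IsRegularCurve γ2
  param1 : ∀ s, norm3 (deriv γ1 s) ^ 2 * (1 + kappa γ1 s ^ 2) = 4
  param2 : ∀ s, norm3 (deriv γ2 s) ^ 2 * (1 + kappa γ2 s ^ 2) = 4
  curv : ∀ s1 s2, kappa γ2 s2 < kappa γ1 s1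

/-- The restriction of `γ` to `[a,b]` is a shell. -/
def IsShell (γ : ℝ → R3) (a b : ℝ) : Prop :=
  a < b ∧ Set.InjOn γ (Set.Ico a b) ∧ γ a = γ b ∧
    LinearIndependent ℝ ![deriv γ a, deriv γ b]

/-- A positive shell: `det(γ(a), γ'(a), γ'(b)) < 0`. -/
def IsPositiveShell (γ : ℝ → R3) (a b : ℝ) : Prop :=
  IsShell γ a b ∧ det3 (γ a) (deriv γ a) (deriv γ b) < 0

/-- A negative shell: `det(γ(a), γ'(a), γ'(b)) > 0`. -/
def IsNegativeShell (γ : ℝ → R3) (a b : ℝ) : Prop :=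
  IsShell γ a b ∧ 0 < det3 (γ a) (deriv γ a) (deriv γ b)

/-- The unit sphere S² in ℝ³. -/
def sphere2 : Set R3 := {x | dot3 x x = 1}

/-- The μ-circle with center `o ∈ S²`. -/
def muCircle (μ : ℝ) (o : R3) : Set R3 :=
  {x | dot3 x x = 1 ∧ dot3 x o = μ / Real.sqrt (1 + μ ^ 2)}

/-- The (open) interior domain of the μ-circle with center `o ∈ S²`. -/
def muDisk (μ : ℝ) (o : R3) : Set R3 :=
  {x | dot3 x x = 1 ∧ μ / Real.sqrt (1 + μ ^ 2) < dot3 x o}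

def normalize3 (v : R3) : R3 := (norm3 v)⁻¹ • v

/-- `Δ` is the interior domain of the shell `γ|_{[a,b]}`: it is a connected component of the
complement of the image of the shell in S², and for each `s ∈ (a,b)` the points obtained by
pushing `γ(s)` slightly in the direction `σ • n(s)` (σ = 1 for a positive shell, σ = -1 for a
negative shell) belong to `Δ`. -/
def IsInteriorDomain (γ : ℝ → R3) (a b σ : ℝ) (Δ : Set R3) : Prop :=
  (∃ p ∈ sphere2 \ γ '' Set.Icc a b,
      Δ = connectedComponentIn (sphere2 \ γ '' Set.Icc a b) p) ∧
    ∀ s ∈ Set.Ioo a b, ∃ ε > 0, ∀ δ ∈ Set.Ioo (0 : ℝ) ε,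
      normalize3 (γ s + (σ * δ) • unitNormal γ s) ∈ Δ

/-- The center `o_t = (μ γ(t) + n(t))/√(1+μ²)` of the tangent μ-circle to `γ` at `γ(t)`
on the normal side. -/
def tangentCenter (μ : ℝ) (γ : ℝ → R3) (t : ℝ) : R3 :=
  (Real.sqrt (1 + μ ^ 2))⁻¹ • (μ • γ t + unitNormal γ t)

/-- The rotation of ℝ³ through angle `θ` about the oriented (unit) axis `o`. -/
def rot3 (o : R3) (θ : ℝ) (x : R3) : R3 :=
  Real.cos θ • x + Real.sin θ • cross3 o x + ((1 - Real.cos θ) * dot3 o x) • o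

/-- A closed regular curve of period `l` is generic: every self-intersection is a
transversal double point. -/
def IsGeneric (γ : ℝ → R3) (l : ℝ) : Prop :=
  ∀ s t : ℝ, γ s = γ t → (¬∃ k : ℤ, s - t = k * l) →
    LinearIndependent ℝ ![deriv γ s, deriv γ t] ∧
      ∀ u : ℝ, γ u = γ s → (∃ k : ℤ, u - s = k * l) ∨ (∃ k : ℤ, u - t = k * l)

/-- The number of crossings (self-intersection points) of a closed curve of period `l`. -/
def crossings (γ : ℝ → R3) (l : ℝ) : ℕ :=
  Set.ncard {p : R3 | ∃ s t : ℝ, γ s = p ∧ γ t = p ∧ ¬∃ k : ℤ, s - t = k * l}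

/-- The spherical (geodesic) distance on S³, identified with SU(2):
`dist(A,B) = arccos(Re trace(A Bᴴ)/2)`, which corresponds to the round distance on the
unit sphere S³ ⊂ ℝ⁴. -/
def distS3 (A B : Mat2) : ℝ := Real.arccos ((Matrix.trace (A * Bᴴ)).re / 2)

/-- The extrinsic diameter of the image of the map `f` associated to the lifts `c₁, c₂`. -/
def extDiam (c1 c2 : ℝ → Mat2) : ℝ :=
  sSup {d : ℝ | ∃ s1 s2 u1 u2 : ℝ, d = distS3 (fmap c1 c2 s1 s2) (fmap c1 c2 u1 u2)}

/-- The parallel curve `γ^θ = (cos θ) γ + (sin θ) n`. -/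
def parallelCurve (γ : ℝ → R3) (θ : ℝ) (s : ℝ) : R3 :=
  Real.cos θ • γ s + Real.sin θ • unitNormal γ s

/-- The arclength-type parameter `s(t) = (1/2)∫₀ᵗ |γ'(u)|√(1+κ(u)²) du`. -/
def arcParam (γ : ℝ → R3) (t : ℝ) : ℝ :=
  (1 / 2) * ∫ u in (0 : ℝ)..t, norm3 (deriv γ u) * Real.sqrt (1 + kappa γ u ^ 2)

theorem inv_mem_unitaryGroup {A : Mat2} (hA : A ∈ Matrix.unitaryGroup (Fin 2) ℂ) :
    A⁻¹ ∈ Matrix.unitaryGroup (Fin 2) ℂ := by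
  rw [Matrix.inv_eq_right_inv (Matrix.mem_unitaryGroup_iff.mp hA)]
  exact Unitary.star_mem hA

theorem fmap_mem_unitaryGroup {c1 c2 : ℝ → Mat2}
    (hc1 : ∀ s, c1 s ∈ Matrix.unitaryGroup (Fin 2) ℂ)
    (hc2 : ∀ s, c2 s ∈ Matrix.unitaryGroup (Fin 2) ℂ) (s1 s2 : ℝ) :
    fmap c1 c2 s1 s2 ∈ Matrix.unitaryGroup (Fin 2) ℂ :=
  mul_mem (mul_mem (mul_mem (inv_mem_unitaryGroup (hc1 0)) (hc1 s1))
    (inv_mem_unitaryGroup (hc2 s2))) (hc2 0)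

theorem fmap_add_of_antiperiodic {c1 : ℝ → Mat2} (c2 : ℝ → Mat2) {l : ℝ}
    (hanti : ∀ s, c1 (s + l) = -c1 s) (s1 s2 : ℝ) :
    fmap c1 c2 (s1 + l) s2 = -fmap c1 c2 s1 s2 := by
  simp only [fmap, hanti, mul_neg, neg_mul]

theorem distS3_neg_right {A : Mat2} (hA : A ∈ Matrix.unitaryGroup (Fin 2) ℂ) :
    distS3 A (-A) = Real.pi := by
  have hA' : A * Aᴴ = 1 := Matrix.mem_unitaryGroup_iff.mp hA
  simp [distS3, hA']

theorem extDiam_eq_pi_of_distS3_eq_pi {c1 c2 : ℝ → Mat2} {s1 s2 u1 u2 : ℝ}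
    (h : distS3 (fmap c1 c2 s1 s2) (fmap c1 c2 u1 u2) = Real.pi) :
    extDiam c1 c2 = Real.pi := by
  refine IsGreatest.csSup_eq ⟨⟨s1, s2, u1, u2, h.symm⟩, ?_⟩
  rintro _ ⟨_, _, _, _, rfl⟩
  exact Real.arccos_le_pi _

theorem stmt6 (γ1 γ2 : ℝ → R3) (l1 l2 : ℝ) (c1 c2 : ℝ → Mat2)
    (h : IsAdmissiblePair γ1 γ2) (h1 : HasPeriod γ1 l1) (h2 : HasPeriod γ2 l2)
    (hc1 : IsLift γ1 c1) (hc2 : IsLift γ2 c2)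
    (hanti : ∀ s, c1 (s + l1) = -c1 s) :
    (∀ s1 s2 : ℝ, fmap c1 c2 (s1 + l1) s2 = -fmap c1 c2 s1 s2) ∧
    (∃ p q : Mat2, (∃ s1 s2 : ℝ, p = fmap c1 c2 s1 s2) ∧
      (∃ u1 u2 : ℝ, q = fmap c1 c2 u1 u2) ∧ q = -p) ∧
    extDiam c1 c2 = Real.pi := by
  have hneg := fmap_add_of_antiperiodic c2 hanti
  have hmem := fmap_mem_unitaryGroup
    (fun s => (Matrix.mem_specialUnitaryGroup_iff.mp (hc1.mem s)).1)
    (fun s => (Matrix.mem_specialUnitaryGroup_iff.mp (hc2.mem s)).1)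
  refine ⟨hneg, ⟨_, _, ⟨0, 0, rfl⟩, ⟨0 + l1, 0, rfl⟩, hneg 0 0⟩, ?_⟩
  refine extDiam_eq_pi_of_distS3_eq_pi (s1 := 0) (s2 := 0) (u1 := 0 + l1) (u2 := 0) ?_
  rw [hneg]
  exact distS3_neg_right (hmem 0 0)
end
end

section
/- Let μ > 0 and let γ₂ be a closed regular curve in S² whose geodesic curvature satisfies max κ₂ < μ. Suppose the restriction of γ₂ to a closed interval [a₂,b₂] is a positive shell with image Σ₂ = γ₂([a₂,b₂]) and interior domain Δ. Then there exists a μ-circle C contained in the closure of Δ that meets Σ₂ in at least two points. -/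
noncomputable section

open Matrix

/-- `θ s t` is a continuous determination of the direction from `(X s, Y s)` to `(X t, Y t)`
for a planar curve on `(a, b)` going to infinity at both ends. -/
structure ChordAngle (a b : ℝ) (X Y : ℝ → ℝ) (θ : ℝ → ℝ → ℝ) : Prop where
  cont : ContinuousOn (fun p : ℝ × ℝ => θ p.1 p.2) (Set.Ioo a b ×ˢ Set.Ioo a b)
  contX : ContinuousOn X (Set.Ioo a b)
  contY : ContinuousOn Y (Set.Ioo a b)
  dir : ∀ s ∈ Set.Ioo a b, ∀ t ∈ Set.Ioo a b, s < t → ∃ r : ℝ, 0 < r ∧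
    X t - X s = r * Real.cos (θ s t) ∧ Y t - Y s = r * Real.sin (θ s t)
  inf_left : ∀ x ∈ Set.Ioo a b, ∀ R : ℝ, ∃ u ∈ Set.Ioo a b, u < x ∧ R < X u ^ 2 + Y u ^ 2
  inf_right : ∀ x ∈ Set.Ioo a b, ∀ R : ℝ, ∃ u ∈ Set.Ioo a b, x < u ∧ R < X u ^ 2 + Y u ^ 2

/-- The curve `(X, Y)` on `(a, b)` misses the open segment between its points at `x` and `y`. -/
def MissesSegment (a b : ℝ) (X Y : ℝ → ℝ) (x y : ℝ) : Prop :=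
  ∀ u ∈ Set.Ioo a b, ∀ k : ℝ, 0 < k → k < 1 →
    X u = (1 - k) * X x + k * X y → Y u = (1 - k) * Y x + k * Y y → False

theorem IsPreconnected.mem_Ioo_of_avoids {J : Set ℝ} (hJ : IsPreconnected J) {g : ℝ → ℝ}
    (hg : ContinuousOn g J) {A B u₀ : ℝ} (hu₀ : u₀ ∈ J) (h₀ : g u₀ ∈ Set.Ioo A B)
    (hA : ∀ u ∈ J, g u ≠ A) (hB : ∀ u ∈ J, g u ≠ B) {u : ℝ} (hu : u ∈ J) :
    g u ∈ Set.Ioo A B := by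
  have key := (hJ.image g hg).ordConnected
  have m0 := Set.mem_image_of_mem g hu₀
  have m1 := Set.mem_image_of_mem g hu
  constructor
  · by_contra h
    push Not at h
    obtain ⟨v, hv, e⟩ := key.out m1 m0 ⟨h, h₀.1.le⟩
    exact hA v hv e
  · by_contra h
    push Not at h
    obtain ⟨v, hv, e⟩ := key.out m0 m1 ⟨h₀.2.le, h⟩
    exact hB v hv e

/-- If `u` sees `x` and `y` in opposite directions, it lies between them. -/
theorem exists_convex_combination_of_opposite {p q x₁ y₁ x₂ y₂ r s C S : ℝ} (hr : 0 < r)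
    (hs : 0 < s) (h₁ : x₁ - p = r * C) (h₂ : y₁ - q = r * S) (h₃ : x₂ - p = -(s * C))
    (h₄ : y₂ - q = -(s * S)) :
    ∃ k : ℝ, 0 < k ∧ k < 1 ∧ p = (1 - k) * x₁ + k * x₂ ∧ q = (1 - k) * y₁ + k * y₂ := by
  have hrs : 0 < r + s := by positivity
  refine ⟨r / (r + s), by positivity, by rw [div_lt_one hrs]; linarith, ?_, ?_⟩
  · field_simp
    linear_combination (-s) * h₁ - r * h₃
  · field_simp
    linear_combination (-s) * h₂ - r * h₄

namespace ChordAngle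

variable {a b : ℝ} {X Y : ℝ → ℝ} {θ : ℝ → ℝ → ℝ}

theorem continuousOn_comp (H : ChordAngle a b X Y θ) {f g : ℝ → ℝ} {J : Set ℝ}
    (hf : Continuous f) (hg : Continuous g) (hfJ : ∀ u ∈ J, f u ∈ Set.Ioo a b)
    (hgJ : ∀ u ∈ J, g u ∈ Set.Ioo a b) : ContinuousOn (fun u => θ (f u) (g u)) J :=
  H.cont.comp (hf.prodMk hg).continuousOn fun u hu => ⟨hfJ u hu, hgJ u hu⟩

theorem exists_bound (H : ChordAngle a b X Y θ) {x y : ℝ} (hx : x ∈ Set.Ioo a b)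
    (hy : y ∈ Set.Ioo a b) : ∃ R : ℝ, ∀ t ∈ Set.Icc x y, X t ^ 2 + Y t ^ 2 ≤ R := by
  have hsub : Set.Icc x y ⊆ Set.Ioo a b := fun t ht =>
    ⟨hx.1.trans_le ht.1, ht.2.trans_lt hy.2⟩
  have hc : ContinuousOn (fun t => X t ^ 2 + Y t ^ 2) (Set.Icc x y) :=
    ((H.contX.mono hsub).pow 2).add ((H.contY.mono hsub).pow 2)
  obtain ⟨R, hR⟩ := (isCompact_Icc.image_of_continuousOn hc).bddAbove
  exact ⟨R, fun t ht => hR ⟨t, ht, rfl⟩⟩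

theorem pos_inner_of_far {p q u v R : ℝ} (h₁ : p ^ 2 + q ^ 2 ≤ R) (h₂ : R < u ^ 2 + v ^ 2) :
    (p - u) * u + (q - v) * v < 0 := by
  nlinarith [sq_nonneg (p - u), sq_nonneg (q - v)]

theorem sub_mem_Ioo_left (H : ChordAngle a b X Y θ) {x y : ℝ} (hx : x ∈ Set.Ioo a b)
    (hy : y ∈ Set.Ioo a b) (hxy : x < y) (hseg : MissesSegment a b X Y x y) {u : ℝ}
    (hu : u ∈ Set.Ioo a x) : θ u y - θ u x ∈ Set.Ioo (-Real.pi) Real.pi := by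
  have hJ : ∀ v ∈ Set.Ioo a x, v ∈ Set.Ioo a b := fun v hv => ⟨hv.1, hv.2.trans hx.2⟩
  have avoid : ∀ v ∈ Set.Ioo a x, ∀ ε : ℝ, (Real.cos ε = -1 ∧ Real.sin ε = 0) →
      θ v y - θ v x ≠ ε := by
    rintro v hv ε ⟨hc, hs⟩ e
    obtain ⟨r, hr, r1, r2⟩ := H.dir v (hJ v hv) x hx hv.2
    obtain ⟨s, hs', s1, s2⟩ := H.dir v (hJ v hv) y hy (hv.2.trans hxy)
    have e' : θ v y = θ v x + ε := by linarith
    rw [e', Real.cos_add, hc, hs] at s1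
    rw [e', Real.sin_add, hc, hs] at s2
    obtain ⟨k, k0, k1, kx, ky⟩ := exists_convex_combination_of_opposite hr hs' r1 r2
      (by rw [s1]; ring) (by rw [s2]; ring)
    exact hseg v (hJ v hv) k k0 k1 kx ky
  obtain ⟨R, hR⟩ := H.exists_bound hx hy
  obtain ⟨u₀, hu₀, hu₀x, hu₀R⟩ := H.inf_left x hx R
  have hstart : θ u₀ y - θ u₀ x ∈ Set.Ioo (-Real.pi) Real.pi := by
    have hsub : ∀ t ∈ Set.Icc x y, t ∈ Set.Ioo a b := fun t ht =>
      ⟨hx.1.trans_le ht.1, ht.2.trans_lt hy.2⟩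
    have hin : ∀ t ∈ Set.Icc x y, ∀ ε : ℝ, (Real.cos ε = -1 ∧ Real.sin ε = 0) →
        θ u₀ t - θ u₀ x ≠ ε := by
      rintro t ht ε ⟨hc, hs⟩ e
      obtain ⟨r, hr, r1, r2⟩ := H.dir u₀ hu₀ x hx hu₀x
      obtain ⟨s, hs', s1, s2⟩ := H.dir u₀ hu₀ t (hsub t ht) (hu₀x.trans_le ht.1)
      have e' : θ u₀ t = θ u₀ x + ε := by linarith
      rw [e', Real.cos_add, hc, hs] at s1
      rw [e', Real.sin_add, hc, hs] at s2
      have p1 := pos_inner_of_far (hR x ⟨le_rfl, hxy.le⟩) hu₀R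
      have p2 := pos_inner_of_far (hR t ht) hu₀R
      rw [r1, r2] at p1
      rw [s1, s2] at p2
      have q1 : Real.cos (θ u₀ x) * X u₀ + Real.sin (θ u₀ x) * Y u₀ < 0 := by
        by_contra h
        push Not at h
        nlinarith [mul_nonneg hr.le h]
      nlinarith [mul_pos hs' (neg_pos.2 q1)]
    refine isPreconnected_Icc.mem_Ioo_of_avoids (g := fun t => θ u₀ t - θ u₀ x) (u₀ := x)
      (J := Set.Icc x y)
      ((H.continuousOn_comp continuous_const continuous_id (fun _ _ => hu₀) hsub).sub
        continuousOn_const)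
      ⟨le_rfl, hxy.le⟩ (by simp [Real.pi_pos]) (fun t ht => hin t ht _ (by simp))
      (fun t ht => hin t ht _ (by simp)) ⟨hxy.le, le_rfl⟩
  exact isPreconnected_Ioo.mem_Ioo_of_avoids (g := fun v => θ v y - θ v x)
    ((H.continuousOn_comp continuous_id continuous_const hJ fun _ _ => hy).sub
      (H.continuousOn_comp continuous_id continuous_const hJ fun _ _ => hx))
    ⟨hu₀.1, hu₀x⟩ hstart (fun v hv => avoid v hv _ (by simp))
    (fun v hv => avoid v hv _ (by simp)) hu

theorem sub_mem_Ioo_right (H : ChordAngle a b X Y θ) {x y : ℝ} (hx : x ∈ Set.Ioo a b)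
    (hy : y ∈ Set.Ioo a b) (hxy : x < y) (hseg : MissesSegment a b X Y x y) {u : ℝ}
    (hu : u ∈ Set.Ioo y b) : θ y u - θ x u ∈ Set.Ioo (-Real.pi) Real.pi := by
  have hJ : ∀ v ∈ Set.Ioo y b, v ∈ Set.Ioo a b := fun v hv => ⟨hy.1.trans hv.1, hv.2⟩
  have avoid : ∀ v ∈ Set.Ioo y b, ∀ ε : ℝ, (Real.cos ε = -1 ∧ Real.sin ε = 0) →
      θ y v - θ x v ≠ ε := by
    rintro v hv ε ⟨hc, hs⟩ e
    obtain ⟨r, hr, r1, r2⟩ := H.dir x hx v (hJ v hv) (hxy.trans hv.1)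
    obtain ⟨s, hs', s1, s2⟩ := H.dir y hy v (hJ v hv) hv.1
    have e' : θ y v = θ x v + ε := by linarith
    rw [e', Real.cos_add, hc, hs] at s1
    rw [e', Real.sin_add, hc, hs] at s2
    obtain ⟨k, k0, k1, kx, ky⟩ := exists_convex_combination_of_opposite (C := -Real.cos (θ x v))
      (S := -Real.sin (θ x v)) (p := X v) (q := Y v) (x₁ := X x) (y₁ := Y x) (x₂ := X y)
      (y₂ := Y y) hr hs' (by linarith) (by linarith) (by linarith) (by linarith)
    exact hseg v (hJ v hv) k k0 k1 kx ky
  obtain ⟨R, hR⟩ := H.exists_bound hx hy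
  obtain ⟨u₀, hu₀, hu₀y, hu₀R⟩ := H.inf_right y hy R
  have hstart : θ y u₀ - θ x u₀ ∈ Set.Ioo (-Real.pi) Real.pi := by
    have hsub : ∀ t ∈ Set.Icc x y, t ∈ Set.Ioo a b := fun t ht =>
      ⟨hx.1.trans_le ht.1, ht.2.trans_lt hy.2⟩
    have hin : ∀ t ∈ Set.Icc x y, ∀ ε : ℝ, (Real.cos ε = -1 ∧ Real.sin ε = 0) →
        θ t u₀ - θ x u₀ ≠ ε := by
      rintro t ht ε ⟨hc, hs⟩ e
      obtain ⟨r, hr, r1, r2⟩ := H.dir x hx u₀ hu₀ (hxy.trans hu₀y)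
      obtain ⟨s, hs', s1, s2⟩ := H.dir t (hsub t ht) u₀ hu₀ (ht.2.trans_lt hu₀y)
      have e' : θ t u₀ = θ x u₀ + ε := by linarith
      rw [e', Real.cos_add, hc, hs] at s1
      rw [e', Real.sin_add, hc, hs] at s2
      have p1 := pos_inner_of_far (hR x ⟨le_rfl, hxy.le⟩) hu₀R
      have p2 := pos_inner_of_far (hR t ht) hu₀R
      rw [← neg_sub, r1, ← neg_sub (Y u₀), r2] at p1
      rw [← neg_sub, s1, ← neg_sub (Y u₀), s2] at p2
      have q1 : 0 < Real.cos (θ x u₀) * X u₀ + Real.sin (θ x u₀) * Y u₀ := by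
        by_contra h
        push Not at h
        nlinarith [mul_nonneg hr.le (neg_nonneg.2 h)]
      nlinarith [mul_pos hs' q1]
    refine isPreconnected_Icc.mem_Ioo_of_avoids (g := fun t => θ t u₀ - θ x u₀) (u₀ := x)
      (J := Set.Icc x y)
      ((H.continuousOn_comp continuous_id continuous_const hsub (fun _ _ => hu₀)).sub
        continuousOn_const)
      ⟨le_rfl, hxy.le⟩ (by simp [Real.pi_pos]) (fun t ht => hin t ht _ (by simp))
      (fun t ht => hin t ht _ (by simp)) ⟨hxy.le, le_rfl⟩
  exact isPreconnected_Ioo.mem_Ioo_of_avoids (g := fun v => θ y v - θ x v)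
    ((H.continuousOn_comp continuous_const continuous_id (fun _ _ => hy) hJ).sub
      (H.continuousOn_comp continuous_const continuous_id (fun _ _ => hx) hJ))
    ⟨hu₀y, hu₀.2⟩ hstart (fun v hv => avoid v hv _ (by simp))
    (fun v hv => avoid v hv _ (by simp)) hu

theorem sub_mem_Icc_diag_left (H : ChordAngle a b X Y θ) {x y : ℝ} (hx : x ∈ Set.Ioo a b)
    (hy : y ∈ Set.Ioo a b) (hxy : x < y) (hseg : MissesSegment a b X Y x y) :
    θ x y - θ x x ∈ Set.Icc (-Real.pi) Real.pi := by
  have hJ : ∀ v ∈ Set.Ioc a x, v ∈ Set.Ioo a b := fun v hv => ⟨hv.1, hv.2.trans_lt hx.2⟩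
  have hc : ContinuousOn (fun v => θ v y - θ v x) (Set.Ioc a x) :=
    (H.continuousOn_comp continuous_id continuous_const hJ fun _ _ => hy).sub
      (H.continuousOn_comp continuous_id continuous_const hJ fun _ _ => hx)
  have hw := (hc x ⟨hx.1, le_rfl⟩).mono Set.Ioo_subset_Ioc_self
  have hcl : x ∈ closure (Set.Ioo a x) := by
    rw [closure_Ioo hx.1.ne]
    exact ⟨hx.1.le, le_rfl⟩
  have := hw.mem_closure hcl (t := Set.Icc (-Real.pi) Real.pi) fun v hv =>
    Set.Ioo_subset_Icc_self (H.sub_mem_Ioo_left hx hy hxy hseg hv)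
  rwa [isClosed_Icc.closure_eq] at this

theorem sub_mem_Icc_diag_right (H : ChordAngle a b X Y θ) {x y : ℝ} (hx : x ∈ Set.Ioo a b)
    (hy : y ∈ Set.Ioo a b) (hxy : x < y) (hseg : MissesSegment a b X Y x y) :
    θ y y - θ x y ∈ Set.Icc (-Real.pi) Real.pi := by
  have hJ : ∀ v ∈ Set.Ico y b, v ∈ Set.Ioo a b := fun v hv => ⟨hy.1.trans_le hv.1, hv.2⟩
  have hc : ContinuousOn (fun v => θ y v - θ x v) (Set.Ico y b) :=
    (H.continuousOn_comp continuous_const continuous_id (fun _ _ => hy) hJ).sub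
      (H.continuousOn_comp continuous_const continuous_id (fun _ _ => hx) hJ)
  have hw := (hc y ⟨le_rfl, hy.2⟩).mono Set.Ioo_subset_Ico_self
  have hcl : y ∈ closure (Set.Ioo y b) := by
    rw [closure_Ioo hy.2.ne]
    exact ⟨le_rfl, hy.2.le⟩
  have := hw.mem_closure hcl (t := Set.Icc (-Real.pi) Real.pi) fun v hv =>
    Set.Ioo_subset_Icc_self (H.sub_mem_Ioo_right hx hy hxy hseg hv)
  rwa [isClosed_Icc.closure_eq] at this

end ChordAngle

/-- The point at parameter `q` lies strictly to the left of the tangent line at parameter `t`. -/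
def LeftOfTangent (X Y : ℝ → ℝ) (θ : ℝ → ℝ → ℝ) (t q : ℝ) : Prop :=
  0 < (Y q - Y t) * Real.cos (θ t t) - (X q - X t) * Real.sin (θ t t)

theorem Real.mem_Ioo_zero_pi_of_sin_pos {x : ℝ} (hx : x ∈ Set.Icc (-Real.pi) Real.pi)
    (hs : 0 < Real.sin x) : x ∈ Set.Ioo 0 Real.pi := by
  constructor
  · by_contra h
    push Not at h
    exact absurd (Real.sin_nonpos_of_nonpos_of_neg_pi_le h hx.1) (not_le.2 hs)
  · refine lt_of_le_of_ne hx.2 fun e => ?_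
    rw [e, Real.sin_pi] at hs
    exact lt_irrefl _ hs

namespace ChordAngle

variable {a b : ℝ} {X Y : ℝ → ℝ} {θ : ℝ → ℝ → ℝ}

theorem interior_avoids (H : ChordAngle a b X Y θ) {x y v : ℝ} (hx : x ∈ Set.Ioo a b)
    (hy : y ∈ Set.Ioo a b) (hseg : MissesSegment a b X Y x y) (hv : v ∈ Set.Ioo x y) {ε : ℝ}
    (hc : Real.cos ε = 1) (hs : Real.sin ε = 0) : θ v y - θ x v ≠ ε := by
  intro e
  have hvI : v ∈ Set.Ioo a b := ⟨hx.1.trans hv.1, hv.2.trans hy.2⟩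
  obtain ⟨r, hr, r1, r2⟩ := H.dir x hx v hvI hv.1
  obtain ⟨s, hs', s1, s2⟩ := H.dir v hvI y hy hv.2
  have e' : θ v y = θ x v + ε := by linarith
  rw [e', Real.cos_add, hc, hs] at s1
  rw [e', Real.sin_add, hc, hs] at s2
  obtain ⟨k, k0, k1, kx, ky⟩ := exists_convex_combination_of_opposite (C := -Real.cos (θ x v))
    (S := -Real.sin (θ x v)) (p := X v) (q := Y v) (x₁ := X x) (y₁ := Y x) (x₂ := X y)
    (y₂ := Y y) hr hs' (by linarith) (by linarith) (by linarith) (by linarith)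
  exact hseg v hvI k k0 k1 kx ky

/-- A chord leaving its initial point, or arriving at its final point, on the left of the curve
leaves every intermediate point of the arc on its right. -/
theorem interior_mem_Ioo (H : ChordAngle a b X Y θ) {x y : ℝ} (hx : x ∈ Set.Ioo a b)
    (hy : y ∈ Set.Ioo a b) (hxy : x < y) (hseg : MissesSegment a b X Y x y)
    (hleft : LeftOfTangent X Y θ x y ∨ LeftOfTangent X Y θ y x) {u : ℝ} (hu : u ∈ Set.Ioo x y) :
    θ u y - θ x u ∈ Set.Ioo 0 (2 * Real.pi) := by
  have hav0 : ∀ v ∈ Set.Ioo x y, θ v y - θ x v ≠ 0 := fun v hv =>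
    H.interior_avoids hx hy hseg hv Real.cos_zero Real.sin_zero
  have hav1 : ∀ v ∈ Set.Ioo x y, θ v y - θ x v ≠ 2 * Real.pi := fun v hv =>
    H.interior_avoids hx hy hseg hv Real.cos_two_pi Real.sin_two_pi
  have hpi := Real.pi_pos
  obtain ⟨r, hr, r1, r2⟩ := H.dir x hx y hy hxy
  rcases hleft with hl | hl
  · have h0 : θ x y - θ x x ∈ Set.Ioo 0 Real.pi := by
      refine Real.mem_Ioo_zero_pi_of_sin_pos (H.sub_mem_Icc_diag_left hx hy hxy hseg) ?_
      rw [LeftOfTangent, r1, r2] at hl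
      rw [Real.sin_sub]
      by_contra h
      push Not at h
      nlinarith [mul_nonneg hr.le (neg_nonneg.2 h)]
    have hJ : ∀ v ∈ Set.Ico x y, v ∈ Set.Ioo a b := fun v hv =>
      ⟨hx.1.trans_le hv.1, hv.2.trans hy.2⟩
    have h0' : θ x y - θ x x ∈ Set.Ioo 0 (2 * Real.pi) := ⟨h0.1, by linarith [h0.2]⟩
    refine isPreconnected_Ico.mem_Ioo_of_avoids (J := Set.Ico x y) (g := fun v => θ v y - θ x v)
      ((H.continuousOn_comp continuous_id continuous_const hJ fun _ _ => hy).sub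
        (H.continuousOn_comp continuous_const continuous_id (fun _ _ => hx) hJ))
      ⟨le_rfl, hxy⟩ h0' (fun v hv => ?_) (fun v hv => ?_) (Set.Ioo_subset_Ico_self hu)
    · rcases hv.1.eq_or_lt with rfl | h
      exacts [h0'.1.ne', hav0 v ⟨h, hv.2⟩]
    · rcases hv.1.eq_or_lt with rfl | h
      exacts [h0'.2.ne, hav1 v ⟨h, hv.2⟩]
  · have h0 : θ y y - θ x y ∈ Set.Ioo 0 Real.pi := by
      refine Real.mem_Ioo_zero_pi_of_sin_pos (H.sub_mem_Icc_diag_right hx hy hxy hseg) ?_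
      rw [LeftOfTangent, ← neg_sub (Y y), r2, ← neg_sub (X y), r1] at hl
      rw [Real.sin_sub]
      by_contra h
      push Not at h
      nlinarith [mul_nonneg hr.le (neg_nonneg.2 h)]
    have hJ : ∀ v ∈ Set.Ioc x y, v ∈ Set.Ioo a b := fun v hv =>
      ⟨hx.1.trans hv.1, hv.2.trans_lt hy.2⟩
    have h0' : θ y y - θ x y ∈ Set.Ioo 0 (2 * Real.pi) := ⟨h0.1, by linarith [h0.2]⟩
    refine isPreconnected_Ioc.mem_Ioo_of_avoids (J := Set.Ioc x y) (g := fun v => θ v y - θ x v)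
      ((H.continuousOn_comp continuous_id continuous_const hJ fun _ _ => hy).sub
        (H.continuousOn_comp continuous_const continuous_id (fun _ _ => hx) hJ))
      ⟨hxy, le_rfl⟩ h0' (fun v hv => ?_) (fun v hv => ?_) (Set.Ioo_subset_Ioc_self hu)
    · rcases hv.2.eq_or_lt with rfl | h
      exacts [h0'.1.ne', hav0 v ⟨hv.1, h⟩]
    · rcases hv.2.eq_or_lt with rfl | h
      exacts [h0'.2.ne, hav1 v ⟨hv.1, h⟩]

/-- If the curve lies in the closed half-plane on the right of its tangent line at `t`, later
points are seen from there by turning right. -/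
theorem le_diag_of_halfPlane (H : ChordAngle a b X Y θ) {t : ℝ} (ht : t ∈ Set.Ioo a b)
    (hhp : ∀ s ∈ Set.Ioo a b, ¬ LeftOfTangent X Y θ t s) {s : ℝ} (hs : s ∈ Set.Ioo a b)
    (hts : t < s) : θ t s ≤ θ t t := by
  by_contra h
  push Not at h
  have hsub : ∀ v ∈ Set.Icc t s, v ∈ Set.Ioo a b := fun v hv =>
    ⟨ht.1.trans_le hv.1, hv.2.trans_lt hs.2⟩
  have hc : ContinuousOn (fun v => θ t v - θ t t) (Set.Icc t s) :=
    (H.continuousOn_comp continuous_const continuous_id (fun _ _ => ht) hsub).sub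
      continuousOn_const
  have hpi := Real.pi_pos
  obtain ⟨v, hv, e⟩ := intermediate_value_Icc hts.le hc
    (show min (θ t s - θ t t) (Real.pi / 2) ∈ _ from
      ⟨by simpa using ⟨h.le, by linarith⟩, min_le_left _ _⟩)
  simp only at e
  have hpos : 0 < θ t v - θ t t := by
    rw [e]
    exact lt_min (by linarith) (by linarith)
  have hlt : θ t v - θ t t < Real.pi := by
    rw [e]
    exact (min_le_right _ _).trans_lt (by linarith)
  have htv : t < v := lt_of_le_of_ne hv.1 fun e => by subst e; simp at hpos
  have hsin := Real.sin_pos_of_pos_of_lt_pi hpos hlt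
  obtain ⟨r, hr, r1, r2⟩ := H.dir t ht v (hsub v hv) htv
  apply hhp v (hsub v hv)
  rw [LeftOfTangent, r1, r2]
  rw [Real.sin_sub] at hsin
  nlinarith [mul_pos hr hsin]

/-- If the curve lies in the closed half-plane on the right of its tangent line at `t`, earlier
points see it by turning left. -/
theorem diag_le_of_halfPlane (H : ChordAngle a b X Y θ) {t : ℝ} (ht : t ∈ Set.Ioo a b)
    (hhp : ∀ s ∈ Set.Ioo a b, ¬ LeftOfTangent X Y θ t s) {s : ℝ} (hs : s ∈ Set.Ioo a b)
    (hst : s < t) : θ t t ≤ θ s t := by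
  by_contra h
  push Not at h
  have hsub : ∀ v ∈ Set.Icc s t, v ∈ Set.Ioo a b := fun v hv =>
    ⟨hs.1.trans_le hv.1, hv.2.trans_lt ht.2⟩
  have hc : ContinuousOn (fun v => θ v t - θ t t) (Set.Icc s t) :=
    (H.continuousOn_comp continuous_id continuous_const hsub (fun _ _ => ht)).sub
      continuousOn_const
  have hpi := Real.pi_pos
  obtain ⟨v, hv, e⟩ := intermediate_value_Icc hst.le hc
    (show max (θ s t - θ t t) (-(Real.pi / 2)) ∈ _ from
      ⟨le_max_left _ _, by simpa using ⟨h.le, by linarith⟩⟩)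
  simp only at e
  have hneg : θ v t - θ t t < 0 := by
    rw [e]
    exact max_lt (by linarith) (by linarith)
  have hgt : -Real.pi < θ v t - θ t t := by
    rw [e]
    exact lt_of_lt_of_le (by linarith) (le_max_right _ _)
  have hvt : v < t := lt_of_le_of_ne hv.2 fun e => by subst e; simp at hneg
  have hsin := Real.sin_neg_of_neg_of_neg_pi_lt hneg hgt
  obtain ⟨r, hr, r1, r2⟩ := H.dir v (hsub v hv) t ht hvt
  apply hhp v (hsub v hv)
  rw [LeftOfTangent, ← neg_sub (Y t), ← neg_sub (X t), r1, r2]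
  rw [Real.sin_sub] at hsin
  nlinarith [mul_pos hr (neg_pos.2 hsin)]

end ChordAngle

/-- In a closed quadrilateral whose directions turn once around, each turn is less than `π`. -/
theorem sub_lt_pi_of_closed_quadrilateral {r₁ r₂ r₃ r₄ α₁ α₂ α₃ α₄ : ℝ} (h₁ : 0 < r₁)
    (h₃ : 0 < r₃) (h₄ : 0 < r₄)
    (hc : r₁ * Real.cos α₁ + r₂ * Real.cos α₂ + r₃ * Real.cos α₃ + r₄ * Real.cos α₄ = 0)
    (hs : r₁ * Real.sin α₁ + r₂ * Real.sin α₂ + r₃ * Real.sin α₃ + r₄ * Real.sin α₄ = 0)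
    (h23 : α₂ < α₃) (h34 : α₃ < α₄) (h41 : α₄ < α₁ + 2 * Real.pi) :
    α₂ - α₁ < Real.pi := by
  by_contra h
  push Not at h
  have s1 : 0 ≤ Real.sin (α₁ - α₂) := by
    have := Real.sin_nonneg_of_nonneg_of_le_pi (x := α₁ - α₂ + 2 * Real.pi) (by linarith)
      (by linarith)
    rwa [Real.sin_add_two_pi] at this
  have s3 : 0 < Real.sin (α₃ - α₂) :=
    Real.sin_pos_of_pos_of_lt_pi (by linarith) (by linarith)
  have s4 : 0 < Real.sin (α₄ - α₂) :=
    Real.sin_pos_of_pos_of_lt_pi (by linarith) (by linarith)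
  rw [Real.sin_sub] at s1 s3 s4
  have e : r₁ * (Real.sin α₁ * Real.cos α₂ - Real.cos α₁ * Real.sin α₂)
      + r₃ * (Real.sin α₃ * Real.cos α₂ - Real.cos α₃ * Real.sin α₂)
      + r₄ * (Real.sin α₄ * Real.cos α₂ - Real.cos α₄ * Real.sin α₂) = 0 := by
    linear_combination Real.cos α₂ * hs - Real.sin α₂ * hc
  have := mul_nonneg h₁.le s1
  have := mul_pos h₃ s3
  have := mul_pos h₄ s4
  linarith

/-- The sum of the exterior angles of a quadrilateral being `2π`, it is convex and its diagonals
meet. -/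
theorem exists_diagonal_weights {x₁ y₁ x₂ y₂ x₃ y₃ x₄ y₄ r₁ r₂ r₃ r₄ A B C D : ℝ}
    (h₁ : 0 < r₁) (h₂ : 0 < r₂) (h₃ : 0 < r₃) (h₄ : 0 < r₄)
    (ax : x₂ - x₁ = r₁ * Real.cos A) (ay : y₂ - y₁ = r₁ * Real.sin A)
    (bx : x₃ - x₂ = r₂ * Real.cos B) (hby : y₃ - y₂ = r₂ * Real.sin B)
    (cx : x₄ - x₃ = r₃ * Real.cos C) (cy : y₄ - y₃ = r₃ * Real.sin C)
    (dx : x₄ - x₁ = r₄ * Real.cos D) (dy : y₄ - y₁ = r₄ * Real.sin D)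
    (hAB : A < B) (hBC : B < C) (hCD : C - D < Real.pi) (hDA : D - A < Real.pi) :
    ∃ w₁ w₂ w₃ w₄ : ℝ, 0 < w₁ ∧ 0 < w₂ ∧ 0 < w₃ ∧ 0 < w₄ ∧ w₁ + w₃ = w₂ + w₄ ∧
      w₁ * x₁ + w₃ * x₃ = w₂ * x₂ + w₄ * x₄ ∧ w₁ * y₁ + w₃ * y₃ = w₂ * y₂ + w₄ * y₄ := by
  have hpi := Real.pi_pos
  have hc : r₁ * Real.cos A + r₂ * Real.cos B + r₃ * Real.cos C
      + r₄ * Real.cos (D + Real.pi) = 0 := by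
    rw [Real.cos_add_pi]
    linarith
  have hs : r₁ * Real.sin A + r₂ * Real.sin B + r₃ * Real.sin C
      + r₄ * Real.sin (D + Real.pi) = 0 := by
    rw [Real.sin_add_pi]
    linarith
  have g1 : B - A < Real.pi := sub_lt_pi_of_closed_quadrilateral h₁ h₃ h₄ hc hs hBC
    (by linarith) (by linarith)
  have g2 : C - B < Real.pi := sub_lt_pi_of_closed_quadrilateral (r₂ := r₃)
    (α₃ := D + Real.pi) (α₄ := A + 2 * Real.pi) h₂ h₄ h₁
    (by rw [Real.cos_add_two_pi, ← hc]; ring) (by rw [Real.sin_add_two_pi, ← hs]; ring)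
    (by linarith) (by linarith) (by linarith)
  have g3 : D + Real.pi - C < Real.pi := sub_lt_pi_of_closed_quadrilateral
    (r₂ := r₄) (α₃ := A + 2 * Real.pi) (α₄ := B + 2 * Real.pi)
    h₃ h₁ h₂ (by rw [Real.cos_add_two_pi, Real.cos_add_two_pi, ← hc]; ring)
    (by rw [Real.sin_add_two_pi, Real.sin_add_two_pi, ← hs]; ring)
    (by linarith) (by linarith) (by linarith)
  have g4 : A + 2 * Real.pi - (D + Real.pi) < Real.pi := sub_lt_pi_of_closed_quadrilateral
    (r₂ := r₁) (α₃ := B + 2 * Real.pi) (α₄ := C + 2 * Real.pi) h₄ h₂ h₃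
    (by rw [Real.cos_add_two_pi, Real.cos_add_two_pi, Real.cos_add_two_pi, ← hc]; ring)
    (by rw [Real.sin_add_two_pi, Real.sin_add_two_pi, Real.sin_add_two_pi, ← hs]; ring)
    (by linarith) (by linarith) (by linarith)
  have s1 : 0 < Real.sin (B - A) := Real.sin_pos_of_pos_of_lt_pi (by linarith) g1
  have s2 : 0 < Real.sin (C - B) := Real.sin_pos_of_pos_of_lt_pi (by linarith) g2
  have s3 : 0 < Real.sin (D + Real.pi - C) := Real.sin_pos_of_pos_of_lt_pi (by linarith) g3
  have s4 : 0 < Real.sin (A + 2 * Real.pi - (D + Real.pi)) :=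
    Real.sin_pos_of_pos_of_lt_pi (by linarith) g4
  rw [Real.sin_sub] at s1 s2 s3 s4
  rw [Real.sin_add_pi, Real.cos_add_pi] at s3 s4
  rw [Real.sin_add_two_pi, Real.cos_add_two_pi] at s4
  have a1 := mul_pos (mul_pos h₁ h₂) s1
  have a2 := mul_pos (mul_pos h₂ h₃) s2
  have a3 := mul_pos (mul_pos h₃ h₄) s3
  have a4 := mul_pos (mul_pos h₄ h₁) s4
  have e1 : (x₂ - x₁) * (y₃ - y₂) - (y₂ - y₁) * (x₃ - x₂) = r₁ * r₂ *
      (Real.sin B * Real.cos A - Real.cos B * Real.sin A) := by rw [ax, ay, bx, hby]; ring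
  have e2 : (x₃ - x₂) * (y₄ - y₃) - (y₃ - y₂) * (x₄ - x₃) = r₂ * r₃ *
      (Real.sin C * Real.cos B - Real.cos C * Real.sin B) := by rw [cx, cy, bx, hby]; ring
  have e3 : -((x₄ - x₃) * (y₄ - y₁) - (y₄ - y₃) * (x₄ - x₁)) = r₃ * r₄ *
      (-Real.sin D * Real.cos C - -Real.cos D * Real.sin C) := by rw [cx, cy, dx, dy]; ring
  have e4 : -((x₄ - x₁) * (y₂ - y₁) - (y₄ - y₁) * (x₂ - x₁)) = r₄ * r₁ *
      (Real.sin A * -Real.cos D - Real.cos A * -Real.sin D) := by rw [ax, ay, dx, dy]; ring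
  rw [← e1] at a1
  rw [← e2] at a2
  rw [← e3] at a3
  rw [← e4] at a4
  exact ⟨_, _, _, _, a2, a3, a4, a1, by ring, by ring, by ring⟩

/-- A quadratic function which vanishes at parameter `t`, is nonnegative exactly outside the open
disc (half-plane, if `A = 0`) with curvature `2 * A / Λ` tangent to the curve on its left at `t`. -/
def discDefect (X Y : ℝ → ℝ) (θ : ℝ → ℝ → ℝ) (A Λ t s : ℝ) : ℝ :=
  A * ((X s - X t) ^ 2 + (Y s - Y t) ^ 2) -
    Λ * ((Y s - Y t) * Real.cos (θ t t) - (X s - X t) * Real.sin (θ t t))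

/-- The chord from `x` to `y` is not crossed by the curve and leaves it on the left at one end. -/
def LeftChord (a b : ℝ) (X Y : ℝ → ℝ) (θ : ℝ → ℝ → ℝ) (x y : ℝ) : Prop :=
  MissesSegment a b X Y x y ∧ (LeftOfTangent X Y θ x y ∨ LeftOfTangent X Y θ y x)

theorem LeftChord.symm {a b : ℝ} {X Y : ℝ → ℝ} {θ : ℝ → ℝ → ℝ} {x y : ℝ}
    (h : LeftChord a b X Y θ x y) : LeftChord a b X Y θ y x :=
  ⟨fun u hu k k0 k1 ex ey => h.1 u hu (1 - k) (by linarith) (by linarith)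
    (by linarith) (by linarith), h.2.symm⟩

/-- If `E₁ / A₁ - E₂ / A₂` is affine, two chords with intersecting interiors, inscribed in the
zero sets of `E₁` and `E₂`, lie in both zero sets. -/
theorem discDefect_eq_zero_of_weights {X Y : ℝ → ℝ} {θ : ℝ → ℝ → ℝ}
    {A₁ Λ₁ A₂ Λ₂ t₁ t₂ p₁ q₁ p₂ q₂ w₁ w₂ w₃ w₄ : ℝ} (hA₁ : 0 < A₁) (hA₂ : 0 < A₂)
    (h₁p : discDefect X Y θ A₁ Λ₁ t₁ p₁ = 0) (h₁q : discDefect X Y θ A₁ Λ₁ t₁ q₁ = 0)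
    (h₂p : discDefect X Y θ A₂ Λ₂ t₂ p₂ = 0) (h₂q : discDefect X Y θ A₂ Λ₂ t₂ q₂ = 0)
    (h₁p' : 0 ≤ discDefect X Y θ A₁ Λ₁ t₁ p₂) (h₁q' : 0 ≤ discDefect X Y θ A₁ Λ₁ t₁ q₂)
    (h₂p' : 0 ≤ discDefect X Y θ A₂ Λ₂ t₂ p₁) (h₂q' : 0 ≤ discDefect X Y θ A₂ Λ₂ t₂ q₁)
    (hw₁ : 0 < w₁) (hw₂ : 0 < w₂) (hw₃ : 0 < w₃) (hw₄ : 0 < w₄) (hw : w₁ + w₃ = w₂ + w₄)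
    (hX : w₁ * X p₁ + w₃ * X q₁ = w₂ * X p₂ + w₄ * X q₂)
    (hY : w₁ * Y p₁ + w₃ * Y q₁ = w₂ * Y p₂ + w₄ * Y q₂) :
    discDefect X Y θ A₂ Λ₂ t₂ p₁ = 0 ∧ discDefect X Y θ A₂ Λ₂ t₂ q₁ = 0 := by
  have key : w₁ * (A₂ * discDefect X Y θ A₁ Λ₁ t₁ p₁ - A₁ * discDefect X Y θ A₂ Λ₂ t₂ p₁)
      + w₃ * (A₂ * discDefect X Y θ A₁ Λ₁ t₁ q₁ - A₁ * discDefect X Y θ A₂ Λ₂ t₂ q₁)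
      = w₂ * (A₂ * discDefect X Y θ A₁ Λ₁ t₁ p₂ - A₁ * discDefect X Y θ A₂ Λ₂ t₂ p₂)
      + w₄ * (A₂ * discDefect X Y θ A₁ Λ₁ t₁ q₂ - A₁ * discDefect X Y θ A₂ Λ₂ t₂ q₂) := by
    simp only [discDefect]
    generalize Real.cos (θ t₁ t₁) = c₁, Real.sin (θ t₁ t₁) = d₁
    generalize Real.cos (θ t₂ t₂) = c₂, Real.sin (θ t₂ t₂) = d₂
    linear_combination (A₁ * A₂ * (X t₁ ^ 2 + Y t₁ ^ 2 - X t₂ ^ 2 - Y t₂ ^ 2)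
        + A₂ * Λ₁ * (Y t₁ * c₁ - X t₁ * d₁) - A₁ * Λ₂ * (Y t₂ * c₂ - X t₂ * d₂)) * hw
      + (2 * A₁ * A₂ * (X t₂ - X t₁) + A₂ * Λ₁ * d₁ - A₁ * Λ₂ * d₂) * hX
      + (2 * A₁ * A₂ * (Y t₂ - Y t₁) - A₂ * Λ₁ * c₁ + A₁ * Λ₂ * c₂) * hY
  rw [h₁p, h₁q, h₂p, h₂q] at key
  have e1 := mul_nonneg hw₁.le (mul_nonneg hA₁.le h₂p')
  have e2 := mul_nonneg hw₃.le (mul_nonneg hA₁.le h₂q')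
  have e3 := mul_nonneg hw₂.le (mul_nonneg hA₂.le h₁p')
  have e4 := mul_nonneg hw₄.le (mul_nonneg hA₂.le h₁q')
  have z1 : w₁ * (A₁ * discDefect X Y θ A₂ Λ₂ t₂ p₁) = 0 := by linarith
  have z2 : w₃ * (A₁ * discDefect X Y θ A₂ Λ₂ t₂ q₁) = 0 := by linarith
  simpa [hw₁.ne', hw₃.ne', hA₁.ne'] using And.intro z1 z2

namespace ChordAngle

variable {a b : ℝ} {X Y : ℝ → ℝ} {θ : ℝ → ℝ → ℝ}

theorem sq_dist_pos (H : ChordAngle a b X Y θ) {s t : ℝ} (hs : s ∈ Set.Ioo a b)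
    (ht : t ∈ Set.Ioo a b) (hst : s ≠ t) : 0 < (X t - X s) ^ 2 + (Y t - Y s) ^ 2 := by
  wlog h : s < t generalizing s t
  · have := this ht hs hst.symm (lt_of_le_of_ne (not_lt.1 h) hst.symm)
    nlinarith
  obtain ⟨r, hr, r1, r2⟩ := H.dir s hs t ht h
  rw [r1, r2]
  nlinarith [Real.cos_sq_add_sin_sq (θ s t), mul_pos hr hr]

theorem leftChord (H : ChordAngle a b X Y θ) {A Λ t q : ℝ} (hA : 0 < A) (hΛ : 0 < Λ)
    (ht : t ∈ Set.Ioo a b) (hq : q ∈ Set.Ioo a b) (htq : t ≠ q)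
    (hE : ∀ s ∈ Set.Ioo a b, 0 ≤ discDefect X Y θ A Λ t s) (hEq : discDefect X Y θ A Λ t q = 0) :
    LeftChord a b X Y θ t q := by
  have hd := H.sq_dist_pos ht hq htq
  have hAd := mul_pos hA hd
  rw [discDefect] at hEq
  refine ⟨fun u hu k k0 k1 ex ey => ?_, Or.inl ?_⟩
  · have := hE u hu
    rw [discDefect, show X u - X t = k * (X q - X t) by rw [ex]; ring,
      show Y u - Y t = k * (Y q - Y t) by rw [ey]; ring] at this
    have hk : 0 < k * (1 - k) := mul_pos k0 (by linarith)
    nlinarith [mul_pos hk hAd]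
  · rw [LeftOfTangent]
    by_contra h
    push Not at h
    nlinarith [mul_nonneg hΛ.le (neg_nonneg.2 h)]

/-- Two interlacing left chords cross. -/
theorem exists_weights (H : ChordAngle a b X Y θ) {s₁ s₂ s₃ s₄ : ℝ} (h₁ : s₁ ∈ Set.Ioo a b)
    (h₄ : s₄ ∈ Set.Ioo a b) (h12 : s₁ < s₂) (h23 : s₂ < s₃) (h34 : s₃ < s₄)
    (c13 : LeftChord a b X Y θ s₁ s₃) (c24 : LeftChord a b X Y θ s₂ s₄) :
    ∃ w₁ w₂ w₃ w₄ : ℝ, 0 < w₁ ∧ 0 < w₂ ∧ 0 < w₃ ∧ 0 < w₄ ∧ w₁ + w₃ = w₂ + w₄ ∧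
      w₁ * X s₁ + w₃ * X s₃ = w₂ * X s₂ + w₄ * X s₄ ∧
      w₁ * Y s₁ + w₃ * Y s₃ = w₂ * Y s₂ + w₄ * Y s₄ := by
  have h₂ : s₂ ∈ Set.Ioo a b := ⟨h₁.1.trans h12, (h23.trans h34).trans h₄.2⟩
  have h₃ : s₃ ∈ Set.Ioo a b := ⟨h₂.1.trans h23, h34.trans h₄.2⟩
  obtain ⟨r₁, r1, ax, ay⟩ := H.dir _ h₁ _ h₂ h12
  obtain ⟨r₂, r2, bx, hby⟩ := H.dir _ h₂ _ h₃ h23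
  obtain ⟨r₃, r3, cx, cy⟩ := H.dir _ h₃ _ h₄ h34
  obtain ⟨r₄, r4, dx, dy⟩ := H.dir _ h₁ _ h₄ (h12.trans (h23.trans h34))
  have i1 := H.interior_mem_Ioo h₁ h₃ (h12.trans h23) c13.1 c13.2 ⟨h12, h23⟩
  have i2 := H.interior_mem_Ioo h₂ h₄ (h23.trans h34) c24.1 c24.2 ⟨h23, h34⟩
  have i3 := H.sub_mem_Ioo_right h₁ h₃ (h12.trans h23) c13.1 ⟨h34, h₄.2⟩
  have i4 := H.sub_mem_Ioo_left h₂ h₄ (h23.trans h34) c24.1 ⟨h₁.1, h12⟩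
  exact exists_diagonal_weights r1 r2 r3 r4 ax ay bx hby cx cy dx dy
    (by linarith [i1.1]) (by linarith [i2.1]) i3.2 i4.2

/-- If a disc tangent on the left at one end of `[x, y]` touches the curve at the other end, any
such disc tangent at an interior point `t` touches the curve again at a point of `[x, y]`. -/
theorem exists_contact (H : ChordAngle a b X Y θ) {x y t₁ q₁ t : ℝ} {A₁ Λ₁ A Λ : ℝ}
    (hx : x ∈ Set.Ioo a b) (hy : y ∈ Set.Ioo a b) (ht : t ∈ Set.Ioo x y)
    (hxy : (t₁ = x ∧ q₁ = y) ∨ (t₁ = y ∧ q₁ = x)) (hA₁ : 0 < A₁) (hΛ₁ : 0 < Λ₁)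
    (hE₁ : ∀ s ∈ Set.Ioo a b, 0 ≤ discDefect X Y θ A₁ Λ₁ t₁ s)
    (hq₁ : discDefect X Y θ A₁ Λ₁ t₁ q₁ = 0) (hA : 0 ≤ A) (hΛ : 0 < Λ)
    (hE : ∀ s ∈ Set.Ioo a b, 0 ≤ discDefect X Y θ A Λ t s)
    (hq : A = 0 ∨ ∃ q ∈ Set.Ioo a b, q ≠ t ∧ discDefect X Y θ A Λ t q = 0) :
    0 < A ∧ ∃ q ∈ Set.Icc x y, q ≠ t ∧ discDefect X Y θ A Λ t q = 0 := by
  have hlt : x < y := ht.1.trans ht.2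
  have htI : t ∈ Set.Ioo a b := ⟨hx.1.trans ht.1, ht.2.trans hy.2⟩
  have hchord : LeftChord a b X Y θ x y := by
    rcases hxy with ⟨rfl, rfl⟩ | ⟨rfl, rfl⟩
    · exact H.leftChord hA₁ hΛ₁ hx hy hlt.ne hE₁ hq₁
    · exact (H.leftChord hA₁ hΛ₁ hy hx hlt.ne' hE₁ hq₁).symm
  have hself : discDefect X Y θ A₁ Λ₁ t₁ t₁ = 0 := by simp [discDefect]
  have hself' : discDefect X Y θ A Λ t t = 0 := by simp [discDefect]
  have hx₁ : discDefect X Y θ A₁ Λ₁ t₁ x = 0 := by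
    rcases hxy with ⟨rfl, rfl⟩ | ⟨rfl, rfl⟩ <;> assumption
  have hy₁ : discDefect X Y θ A₁ Λ₁ t₁ y = 0 := by
    rcases hxy with ⟨rfl, rfl⟩ | ⟨rfl, rfl⟩ <;> assumption
  have hApos : 0 < A := by
    refine lt_of_le_of_ne hA fun e => ?_
    have hhp : ∀ s ∈ Set.Ioo a b, ¬ LeftOfTangent X Y θ t s := fun s hs hl => by
      have := hE s hs
      rw [discDefect, ← e] at this
      rw [LeftOfTangent] at hl
      nlinarith [mul_pos hΛ hl]
    linarith [(H.interior_mem_Ioo hx hy hlt hchord.1 hchord.2 ht).1,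
      H.le_diag_of_halfPlane htI hhp hy ht.2, H.diag_le_of_halfPlane htI hhp hx ht.1]
  refine ⟨hApos, ?_⟩
  obtain ⟨q, hqI, hqt, hq0⟩ := hq.resolve_left hApos.ne'
  have hchord' := H.leftChord hApos hΛ htI hqI hqt.symm hE hq0
  by_cases hqx : q < x
  · obtain ⟨w₁, w₂, w₃, w₄, p1, p2, p3, p4, e, eX, eY⟩ :=
      H.exists_weights hqI hy hqx ht.1 ht.2 hchord'.symm hchord
    exact ⟨x, ⟨le_rfl, hlt.le⟩, ht.1.ne, (discDefect_eq_zero_of_weights hA₁ hApos hx₁ hy₁ hq0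
      hself' (hE₁ _ hqI) (hE₁ _ htI) (hE _ hx) (hE _ hy) p2 p1 p4 p3 e.symm eX.symm eY.symm).1⟩
  by_cases hqy : y < q
  · obtain ⟨w₁, w₂, w₃, w₄, p1, p2, p3, p4, e, eX, eY⟩ :=
      H.exists_weights hx hqI ht.1 ht.2 hqy hchord hchord'
    exact ⟨x, ⟨le_rfl, hlt.le⟩, ht.1.ne, (discDefect_eq_zero_of_weights hA₁ hApos hx₁ hy₁ hself'
      hq0 (hE₁ _ htI) (hE₁ _ hqI) (hE _ hx) (hE _ hy) p1 p2 p3 p4 e eX eY).1⟩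
  exact ⟨q, ⟨not_lt.1 hqx, not_lt.1 hqy⟩, hqt, hq0⟩

end ChordAngle

/-- The tangent discs on the left of a plane curve going to infinity at both ends cannot all be
supporting discs touching the curve again (or half-planes), with contacts uniformly separated. -/
theorem ChordAngle.false_of_contacts {a b : ℝ} {X Y : ℝ → ℝ} {θ : ℝ → ℝ → ℝ}
    (H : ChordAngle a b X Y θ) {A Λ : ℝ → ℝ} (hA : ∀ t ∈ Set.Ioo a b, 0 ≤ A t)
    (hΛ : ∀ t ∈ Set.Ioo a b, 0 < Λ t)
    (hE : ∀ t ∈ Set.Ioo a b, ∀ s ∈ Set.Ioo a b, 0 ≤ discDefect X Y θ (A t) (Λ t) t s)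
    (hq : ∀ t ∈ Set.Ioo a b, A t = 0 ∨
      ∃ q ∈ Set.Ioo a b, q ≠ t ∧ discDefect X Y θ (A t) (Λ t) t q = 0)
    {ε : ℝ} (hε : 0 < ε) (hsep : ∀ t ∈ Set.Ioo a b, ∀ q ∈ Set.Ioo a b, q ≠ t →
      discDefect X Y θ (A t) (Λ t) t q = 0 → ε ≤ |q - t|)
    {t₁ : ℝ} (ht₁ : t₁ ∈ Set.Ioo a b) (hAt₁ : 0 < A t₁) : False := by
  have key : ∀ n : ℕ, ∀ t ∈ Set.Ioo a b, ∀ q ∈ Set.Ioo a b, q ≠ t → 0 < A t →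
      discDefect X Y θ (A t) (Λ t) t q = 0 → |q - t| < ε * 2 ^ n → False := by
    intro n
    induction n with
    | zero =>
      intro t ht q hq hqt _ h0 hlt
      rw [pow_zero, mul_one] at hlt
      exact absurd (hsep t ht q hq hqt h0) (not_le.2 hlt)
    | succ n ih =>
      intro t ht q hqI hqt hAt h0 hlt
      rw [pow_succ] at hlt
      have hsub : ∀ x ∈ Set.Ioo a b, ∀ y ∈ Set.Ioo a b, x < y →
          ((t = x ∧ q = y) ∨ (t = y ∧ q = x)) → False := by
        intro x hx y hy hxy htq
        have hlen : y - x < ε * (2 ^ n * 2) := by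
          rcases htq with ⟨rfl, rfl⟩ | ⟨rfl, rfl⟩
          · exact (le_abs_self _).trans_lt hlt
          · rw [← neg_sub]
            exact (neg_le_abs _).trans_lt hlt
        have hm : (x + y) / 2 ∈ Set.Ioo x y := ⟨by linarith, by linarith⟩
        have hmI : (x + y) / 2 ∈ Set.Ioo a b := ⟨hx.1.trans hm.1, hm.2.trans hy.2⟩
        obtain ⟨hAm, q', hq', hne, h0'⟩ := H.exists_contact hx hy hm htq hAt (hΛ t ht) (hE t ht)
          h0 (hA _ hmI) (hΛ _ hmI) (hE _ hmI) (hq _ hmI)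
        refine ih _ hmI q' ⟨hx.1.trans_le hq'.1, hq'.2.trans_lt hy.2⟩ hne hAm h0' ?_
        rw [abs_lt]
        constructor <;> linarith [hq'.1, hq'.2]
      rcases hqt.lt_or_gt with h | h
      · exact hsub q hqI t ht h (Or.inr ⟨rfl, rfl⟩)
      · exact hsub t ht q hqI h (Or.inl ⟨rfl, rfl⟩)
  obtain ⟨q, hqI, hqt, h0⟩ := (hq t₁ ht₁).resolve_left hAt₁.ne'
  obtain ⟨n, hn⟩ := pow_unbounded_of_one_lt (|q - t₁| / ε) one_lt_two
  exact key n t₁ ht₁ q hqI hqt hAt₁ h0 (by rwa [div_lt_iff₀' hε] at hn)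

/-- A continuous version of the difference quotient of a `C¹` function. -/
theorem exists_continuous_slope {f : ℝ → ℝ} (hf : ContDiff ℝ 1 f) :
    ∃ S : ℝ → ℝ → ℝ, Continuous (fun p : ℝ × ℝ => S p.1 p.2) ∧ (∀ s, S s s = deriv f s) ∧
      ∀ s t, f t - f s = (t - s) * S s t := by
  have hd : Continuous (deriv f) := hf.continuous_deriv le_rfl
  refine ⟨fun s t => ∫ k in (0 : ℝ)..1, deriv f (s + k * (t - s)), ?_, fun s => by simp, ?_⟩
  · exact intervalIntegral.continuous_parametric_intervalIntegral_of_continuous'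
      (f := fun (p : ℝ × ℝ) k => deriv f (p.1 + k * (p.2 - p.1))) (by fun_prop) 0 1
  · intro s t
    have hderiv : ∀ k ∈ Set.uIcc (0 : ℝ) 1, HasDerivAt (fun k => f (s + k * (t - s)))
        ((t - s) * deriv f (s + k * (t - s))) k := fun k _ => by
      have h1 : HasDerivAt (fun k : ℝ => s + k * (t - s)) (t - s) k := by
        simpa using ((hasDerivAt_id k).mul_const (t - s)).const_add s
      have h2 : HasDerivAt f (deriv f (s + k * (t - s))) (s + k * (t - s)) :=
        (hf.differentiable one_ne_zero _).hasDerivAt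
      exact (h2.comp k h1).congr_deriv (mul_comm _ _)
    have := intervalIntegral.integral_eq_sub_of_hasDerivAt hderiv
      (Continuous.intervalIntegrable (by fun_prop) _ _)
    rw [intervalIntegral.integral_const_mul] at this
    simpa using this.symm

/-- A stereographic projection turns a `C¹` simple loop on the sphere, based at the north pole,
into a plane curve with a continuous chord angle, and the cap tangent to the loop on the left at
`t` into a disc (or half-plane) tangent to the plane curve on the left. -/
theorem exists_chordAngle_of_northPole {a b : ℝ} (hab : a < b) {x y z : ℝ → ℝ}
    (hx : ContDiff ℝ 1 x) (hy : ContDiff ℝ 1 y) (hz : ContDiff ℝ 1 z)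
    (hsph : ∀ s, x s * x s + y s * y s + z s * z s = 1)
    (hreg : ∀ s, deriv x s = 0 → deriv y s = 0 → deriv z s = 0 → False)
    (hinj : ∀ s ∈ Set.Ico a b, ∀ t ∈ Set.Ico a b, x s = x t → y s = y t → z s = z t → s = t)
    (hza : z a = 1) (hzb : z b = 1) :
    ∃ X Y : ℝ → ℝ, ∃ θ : ℝ → ℝ → ℝ, ∃ Λ : ℝ → ℝ, ChordAngle a b X Y θ ∧ (∀ t, 0 < Λ t) ∧
      (∀ t ∈ Set.Ioo a b, z t < 1) ∧
      ∀ t ∈ Set.Ioo a b, ∀ s ∈ Set.Ioo a b, ∀ ρ : ℝ,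
        discDefect X Y θ ((ρ * (1 - z t) - (x t * deriv y t - y t * deriv x t)) * (1 - z t) / 2)
          (Λ t) t s = (ρ * (1 - (x s * x t + y s * y t + z s * z t)) -
            (x s * (y t * deriv z t - z t * deriv y t) + y s * (z t * deriv x t - x t * deriv z t)
              + z s * (x t * deriv y t - y t * deriv x t))) * ((1 - z t) / (1 - z s)) := by
  have hz1 : ∀ t ∈ Set.Ioo a b, z t < 1 := by
    intro t ht
    have hle : z t ≤ 1 := by nlinarith [hsph t, sq_nonneg (x t), sq_nonneg (y t)]
    refine lt_of_le_of_ne hle fun e => ht.1.ne' ?_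
    have hzero : ∀ s, z s = 1 → x s = 0 ∧ y s = 0 := fun s hs => by
      have := hsph s
      rw [hs] at this
      constructor <;> nlinarith [sq_nonneg (x s), sq_nonneg (y s)]
    exact hinj t ⟨ht.1.le, ht.2⟩ a ⟨le_rfl, hab⟩ ((hzero t e).1.trans (hzero a hza).1.symm)
      ((hzero t e).2.trans (hzero a hza).2.symm) (e.trans hza.symm)
  have hd : ∀ s, x s * deriv x s + y s * deriv y s + z s * deriv z s = 0 := by
    intro s
    have e : (fun s => x s * x s + y s * y s + z s * z s) = fun _ => 1 := funext hsph
    have hdx := (hx.differentiable one_ne_zero s).hasDerivAt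
    have hdy := (hy.differentiable one_ne_zero s).hasDerivAt
    have hdz := (hz.differentiable one_ne_zero s).hasDerivAt
    have h1 := ((hdx.fun_mul hdx).fun_add (hdy.fun_mul hdy)).fun_add (hdz.fun_mul hdz)
    rw [e] at h1
    have := h1.unique (hasDerivAt_const s 1)
    linarith
  obtain ⟨Sx, cSx, dSx, eSx⟩ := exists_continuous_slope hx
  obtain ⟨Sy, cSy, dSy, eSy⟩ := exists_continuous_slope hy
  obtain ⟨Sz, cSz, dSz, eSz⟩ := exists_continuous_slope hz
  have cx := hx.continuous
  have cy := hy.continuous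
  have cz := hz.continuous
  set W : ℝ × ℝ → ℂ := fun p => ((Sx p.1 p.2 * (1 - z p.1) + x p.1 * Sz p.1 p.2 : ℝ) : ℂ) +
    ((-(Sy p.1 p.2 * (1 - z p.1) + y p.1 * Sz p.1 p.2) : ℝ) : ℂ) * Complex.I with hW
  have hWc : Continuous W := by
    have cz' : Continuous fun p : ℝ × ℝ => z p.1 := cz.comp continuous_fst
    have cx' : Continuous fun p : ℝ × ℝ => x p.1 := cx.comp continuous_fst
    have cy' : Continuous fun p : ℝ × ℝ => y p.1 := cy.comp continuous_fst
    fun_prop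
  have hWre : ∀ s t, (W (s, t)).re = Sx s t * (1 - z s) + x s * Sz s t := fun s t => by simp [hW]
  have hWim : ∀ s t, (W (s, t)).im = -(Sy s t * (1 - z s) + y s * Sz s t) := fun s t => by
    simp [hW]
  have hre : ∀ s t, (t - s) * (W (s, t)).re = x t * (1 - z s) - x s * (1 - z t) := fun s t => by
    rw [hWre]
    linear_combination (z s - 1) * eSx s t - x s * eSz s t
  have him : ∀ s t, (t - s) * (W (s, t)).im = -(y t * (1 - z s) - y s * (1 - z t)) := fun s t => by
    rw [hWim]
    linear_combination (1 - z s) * eSy s t + y s * eSz s t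
  have hW0 : (0 : ℂ) ∉ W '' (Set.Ioo a b ×ˢ Set.Ioo a b) := by
    rintro ⟨⟨s, t⟩, ⟨hs, ht⟩, h0⟩
    simp only at hs ht
    have zs := hz1 s hs
    have zt := hz1 t ht
    by_cases hst : s = t
    · subst hst
      have r0 := hWre s s
      have i0 := hWim s s
      rw [h0, dSx, dSz] at r0
      rw [h0, dSy, dSz] at i0
      simp only [Complex.zero_re, Complex.zero_im] at r0 i0
      have hz' : (1 - z s) * deriv z s = 0 := by
        linear_combination (-x s) * r0 + y s * i0 - (1 - z s) * hd s - deriv z s * hsph s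
      have hz0 : deriv z s = 0 := (mul_eq_zero.1 hz').resolve_left (by linarith)
      rw [hz0] at r0 i0
      have hx0 : deriv x s = 0 := (mul_eq_zero.1 (show deriv x s * (1 - z s) = 0 by linarith)
        ).resolve_right (by linarith)
      have hy0 : deriv y s = 0 := (mul_eq_zero.1 (show deriv y s * (1 - z s) = 0 by linarith)
        ).resolve_right (by linarith)
      exact hreg s hx0 hy0 hz0
    · have r0 := hre s t
      have i0 := him s t
      rw [h0] at r0 i0
      simp only [Complex.zero_re, Complex.zero_im, mul_zero] at r0 i0
      have hzz : ((1 - z s) * (1 - z t)) * (z t - z s) = 0 := by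
        have h1 := hsph s
        have h2 := hsph t
        have e1 : x t * (1 - z s) = x s * (1 - z t) := by linarith
        have e2 : y t * (1 - z s) = y s * (1 - z t) := by linarith
        have e3 : (x t * x t + y t * y t) * (1 - z s) ^ 2 =
            (x s * x s + y s * y s) * (1 - z t) ^ 2 := by
          linear_combination (x t * (1 - z s) + x s * (1 - z t)) * e1 +
            (y t * (1 - z s) + y s * (1 - z t)) * e2
        linear_combination (1 / 2) * e3 - (1 / 2) * (1 - z s) ^ 2 * h2
          + (1 / 2) * (1 - z t) ^ 2 * h1
      have hzz' : z t = z s := by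
        have := (mul_eq_zero.1 hzz).resolve_left
          (mul_pos (sub_pos.2 zs) (sub_pos.2 zt)).ne'
        linarith
      rw [hzz'] at r0 i0
      have h1z : (1 - z s) ≠ 0 := by linarith
      refine hst (hinj s ⟨hs.1.le, hs.2⟩ t ⟨ht.1.le, ht.2⟩ ?_ ?_ hzz'.symm)
      · exact mul_right_cancel₀ h1z (by linarith)
      · exact mul_right_cancel₀ h1z (by linarith)
  have hconv : Convex ℝ (Set.Ioo a b ×ˢ Set.Ioo a b) := (convex_Ioo a b).prod (convex_Ioo a b)
  have hne : (Set.Ioo a b ×ˢ Set.Ioo a b).Nonempty :=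
    (Set.nonempty_Ioo.2 hab).prod (Set.nonempty_Ioo.2 hab)
  have := hconv.contractibleSpace hne
  obtain ⟨L, hLc, hL⟩ := Complex.exists_continuousOn_eqOn_exp_comp
    (U := Set.Ioo a b ×ˢ Set.Ioo a b) (g := W) (SimplyConnectedSpace.ofContractible _)
    (isOpen_Ioo.prod isOpen_Ioo)
    hWc.continuousOn hW0
  have hexp : ∀ s ∈ Set.Ioo a b, ∀ t ∈ Set.Ioo a b,
      (W (s, t)).re = Real.exp (L (s, t)).re * Real.cos (L (s, t)).im ∧
      (W (s, t)).im = Real.exp (L (s, t)).re * Real.sin (L (s, t)).im := fun s hs t ht => by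
    have := hL (show (s, t) ∈ Set.Ioo a b ×ˢ Set.Ioo a b from ⟨hs, ht⟩)
    rw [← this]
    exact ⟨Complex.exp_re _, Complex.exp_im _⟩
  have hsq : ∀ s, z s < 1 → (x s / (1 - z s)) ^ 2 + (-y s / (1 - z s)) ^ 2 =
      (1 + z s) / (1 - z s) := fun s hs => by
    have : (1 - z s) ≠ 0 := by linarith
    field_simp
    linear_combination hsph s
  have hlim : ∀ c, z c = 1 → ∀ R : ℝ, ∀ᶠ u in nhds c, R * (1 - z u) < 1 + z u := by
    intro c hc R
    refine ContinuousAt.eventually_lt (f := fun u => R * (1 - z u)) (g := fun u => 1 + z u)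
      (by fun_prop) (by fun_prop) ?_
    rw [hc]
    norm_num
  refine ⟨fun s => x s / (1 - z s), fun s => -y s / (1 - z s), fun s t => (L (s, t)).im,
    fun t => Real.exp (L (t, t)).re, ⟨?_, ?_, ?_, ?_, ?_, ?_⟩, fun t => Real.exp_pos _, hz1, ?_⟩
  · exact Complex.continuous_im.comp_continuousOn hLc
  · exact ContinuousOn.div cx.continuousOn (by fun_prop) fun t ht => by linarith [hz1 t ht]
  · exact ContinuousOn.div cy.neg.continuousOn (by fun_prop) fun t ht => by linarith [hz1 t ht]
  · intro s hs t ht hst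
    have zs : 0 < 1 - z s := by linarith [hz1 s hs]
    have zt : 0 < 1 - z t := by linarith [hz1 t ht]
    refine ⟨(t - s) * Real.exp (L (s, t)).re / ((1 - z s) * (1 - z t)),
      div_pos (mul_pos (sub_pos.2 hst) (Real.exp_pos _)) (mul_pos zs zt), ?_, ?_⟩
    · rw [div_mul_eq_mul_div, mul_assoc, ← (hexp s hs t ht).1, hre]
      field_simp
    · rw [div_mul_eq_mul_div, mul_assoc, ← (hexp s hs t ht).2, him]
      field_simp
      ring
  · intro t ht R
    have h1 := (hlim a hza R).filter_mono (nhdsWithin_le_nhds (s := Set.Ioi a))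
    obtain ⟨u, hu, hut⟩ := (h1.and (Ioo_mem_nhdsGT ht.1)).exists
    have huI : u ∈ Set.Ioo a b := ⟨hut.1, hut.2.trans ht.2⟩
    refine ⟨u, huI, hut.2, ?_⟩
    rw [hsq u (hz1 u huI), lt_div_iff₀ (by linarith [hz1 u huI])]
    exact hu
  · intro t ht R
    have h1 := (hlim b hzb R).filter_mono (nhdsWithin_le_nhds (s := Set.Iio b))
    obtain ⟨u, hu, hut⟩ := (h1.and (Ioo_mem_nhdsLT ht.2)).exists
    have huI : u ∈ Set.Ioo a b := ⟨ht.1.trans hut.1, hut.2⟩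
    refine ⟨u, huI, hut.1, ?_⟩
    rw [hsq u (hz1 u huI), lt_div_iff₀ (by linarith [hz1 u huI])]
    exact hu
  · intro t ht s hs ρ
    have zs : 1 - z s ≠ 0 := by linarith [hz1 s hs]
    have zt : 1 - z t ≠ 0 := by linarith [hz1 t ht]
    have h1 := hsph s
    have h2 := hsph t
    have e1 := (hexp t ht t ht).1
    have e2 := (hexp t ht t ht).2
    rw [hWre, dSx, dSz] at e1
    rw [hWim, dSy, dSz] at e2
    have hrw : ∀ A p q : ℝ, A * (p ^ 2 + q ^ 2) - Real.exp (L (t, t)).re *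
        (q * Real.cos (L (t, t)).im - p * Real.sin (L (t, t)).im) = A * (p ^ 2 + q ^ 2) -
        (q * (deriv x t * (1 - z t) + x t * deriv z t) -
          p * (-(deriv y t * (1 - z t) + y t * deriv z t))) := fun A p q => by
      rw [e1, e2]
      ring
    rw [discDefect, hrw]
    have hQ : (x s / (1 - z s) - x t / (1 - z t)) ^ 2 +
        (-y s / (1 - z s) - -y t / (1 - z t)) ^ 2 =
        2 * (1 - (x s * x t + y s * y t + z s * z t)) / ((1 - z s) * (1 - z t)) := by
      field_simp
      linear_combination (1 - z t) ^ 2 * h1 + (1 - z s) ^ 2 * h2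
    have hD : (-y s / (1 - z s) - -y t / (1 - z t)) *
          (deriv x t * (1 - z t) + x t * deriv z t) -
        (x s / (1 - z s) - x t / (1 - z t)) * (-(deriv y t * (1 - z t) + y t * deriv z t)) =
        ((x s * (y t * deriv z t - z t * deriv y t) + y s * (z t * deriv x t - x t * deriv z t)
          + z s * (x t * deriv y t - y t * deriv x t)) * (1 - z t) -
          (x t * deriv y t - y t * deriv x t) * (1 - (x s * x t + y s * y t + z s * z t)))
          / (1 - z s) := by
      field_simp
      linear_combination x s * (1 - z t) * (y t * hd t - deriv y t * h2)
        + y s * (1 - z t) * (deriv x t * h2 - x t * hd t)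
    rw [hQ, hD]
    field_simp
    ring

/-- Up to a positive factor, `ν - ⟨γ s, ν γ t + n t⟩`: it is nonnegative exactly when `γ s` does
not lie in the open cap with boundary of geodesic curvature `ν` tangent to `γ` on its left
at `t`. -/
def capDefect (γ : ℝ → R3) (ν t s : ℝ) : ℝ :=
  ν * norm3 (deriv γ t) * (1 - dot3 (γ s) (γ t)) - det3 (γ s) (γ t) (deriv γ t)

theorem dot3_self_eq_zero {v : R3} : dot3 v v = 0 ↔ v = 0 := by
  constructor
  · intro h
    simp only [dot3] at h
    ext i
    fin_cases i <;> simp <;> nlinarith [sq_nonneg (v 0), sq_nonneg (v 1), sq_nonneg (v 2)]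
  · rintro rfl
    simp [dot3]

theorem exists_spherical_coordinates {p : R3} (hp : dot3 p p = 1) :
    ∃ c s r : ℝ, c ^ 2 + s ^ 2 = 1 ∧ r ^ 2 + p 2 ^ 2 = 1 ∧ p 0 = r * c ∧ p 1 = r * s := by
  simp only [dot3] at hp
  by_cases h : p 0 ^ 2 + p 1 ^ 2 = 0
  · have h0 : p 0 = 0 := by nlinarith [sq_nonneg (p 0), sq_nonneg (p 1)]
    have h1 : p 1 = 0 := by nlinarith [sq_nonneg (p 0), sq_nonneg (p 1)]
    exact ⟨1, 0, 0, by norm_num, by rw [h0, h1] at hp; linarith, by simp [h0], by simp [h1]⟩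
  · have hpos : 0 < p 0 ^ 2 + p 1 ^ 2 := lt_of_le_of_ne (by positivity) (Ne.symm h)
    have hr := Real.sqrt_pos.2 hpos
    have hr2 := Real.sq_sqrt hpos.le
    refine ⟨p 0 / √(p 0 ^ 2 + p 1 ^ 2), p 1 / √(p 0 ^ 2 + p 1 ^ 2), √(p 0 ^ 2 + p 1 ^ 2),
      ?_, by linarith, by field_simp, by field_simp⟩
    rw [div_pow, div_pow, hr2]
    field_simp

theorem IsRegularCurve.hasDerivAt_apply {γ : ℝ → R3} (h : IsRegularCurve γ) (i : Fin 3) (s : ℝ) :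
    HasDerivAt (fun t => γ t i) (deriv γ s i) s :=
  hasDerivAt_pi.1 (h.smooth.differentiable (by simp) s).hasDerivAt i

/-- The stereographic projection of a simple loop from its base point has a continuous chord angle,
and turns its tangent caps into tangent discs. -/
theorem IsRegularCurve.exists_chordAngle {γ : ℝ → R3} (h : IsRegularCurve γ) {a b : ℝ}
    (hab : a < b) (hinj : Set.InjOn γ (Set.Ico a b)) (hγ : γ a = γ b) :
    ∃ X Y : ℝ → ℝ, ∃ θ : ℝ → ℝ → ℝ, ∃ Λ : ℝ → ℝ, ChordAngle a b X Y θ ∧ (∀ t, 0 < Λ t) ∧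
      (∀ t ∈ Set.Ioo a b, 0 < 1 - dot3 (γ a) (γ t)) ∧
      ∀ t ∈ Set.Ioo a b, ∀ s ∈ Set.Ioo a b, ∀ ν : ℝ,
        discDefect X Y θ (capDefect γ ν t a * (1 - dot3 (γ a) (γ t)) / 2) (Λ t) t s =
          capDefect γ ν t s * ((1 - dot3 (γ a) (γ t)) / (1 - dot3 (γ a) (γ s))) := by
  obtain ⟨c, s, r, hcs, hrz, h0, h1⟩ := exists_spherical_coordinates (h.sphere a)
  have hsm : ∀ i, ContDiff ℝ 1 fun t => γ t i := contDiff_pi.1 (h.smooth.of_le (by simp))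
  set p := γ a with hpdef
  set x : ℝ → ℝ := fun t => -s * γ t 0 + c * γ t 1 with hxdef
  set y : ℝ → ℝ := fun t => -(p 2 * c) * γ t 0 + -(p 2 * s) * γ t 1 + r * γ t 2 with hydef
  set z : ℝ → ℝ := fun t => r * c * γ t 0 + r * s * γ t 1 + p 2 * γ t 2 with hzdef
  have dx : ∀ t, deriv x t = -s * deriv γ t 0 + c * deriv γ t 1 := fun t =>
    (((h.hasDerivAt_apply 0 t).const_mul _).add ((h.hasDerivAt_apply 1 t).const_mul _)).deriv
  have dy : ∀ t, deriv y t = -(p 2 * c) * deriv γ t 0 + -(p 2 * s) * deriv γ t 1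
      + r * deriv γ t 2 := fun t =>
    ((((h.hasDerivAt_apply 0 t).const_mul _).add ((h.hasDerivAt_apply 1 t).const_mul _)).add
      ((h.hasDerivAt_apply 2 t).const_mul _)).deriv
  have dz : ∀ t, deriv z t = r * c * deriv γ t 0 + r * s * deriv γ t 1 + p 2 * deriv γ t 2 :=
    fun t => ((((h.hasDerivAt_apply 0 t).const_mul _).add
      ((h.hasDerivAt_apply 1 t).const_mul _)).add ((h.hasDerivAt_apply 2 t).const_mul _)).deriv
  have hdot : ∀ u v : R3, dot3 u v = (-s * u 0 + c * u 1) * (-s * v 0 + c * v 1) +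
      (-(p 2 * c) * u 0 + -(p 2 * s) * u 1 + r * u 2) *
        (-(p 2 * c) * v 0 + -(p 2 * s) * v 1 + r * v 2) +
      (r * c * u 0 + r * s * u 1 + p 2 * u 2) * (r * c * v 0 + r * s * v 1 + p 2 * v 2) := by
    intro u v
    simp only [dot3]
    linear_combination (-(c * u 0 + s * u 1) * (c * v 0 + s * v 1) - u 2 * v 2) * hrz
      - (u 0 * v 0 + u 1 * v 1) * hcs
  have hdet : ∀ u v w : R3, det3 u v w = (c ^ 2 + s ^ 2) * (r ^ 2 + p 2 ^ 2) * det3 u v w := by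
    intro u v w
    rw [hcs, hrz]
    ring
  have hz : ∀ t, z t = dot3 p (γ t) := fun t => by simp only [hzdef, dot3, h0, h1]
  have hza : z a = 1 := (hz a).trans (h.sphere a)
  have hzb : z b = 1 := by rw [hz, ← hγ]; exact h.sphere a
  obtain ⟨X, Y, θ, Λ, H, hΛ, hz1, key⟩ := exists_chordAngle_of_northPole hab (x := x) (y := y)
    (z := z) (by fun_prop) (by fun_prop) (by fun_prop)
    (fun t => (hdot (γ t) (γ t)).symm.trans (h.sphere t))
    (fun t ex ey ez => h.reg t <| dot3_self_eq_zero.1 <| by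
      rw [hdot, ← dx, ← dy, ← dz, ex, ey, ez]
      ring)
    (fun t ht u hu ex ey ez => hinj ht hu <| by
      have : γ t - γ u = 0 := dot3_self_eq_zero.1 <| by
        rw [hdot]
        simp only [Pi.sub_apply]
        simp only [hxdef, hydef, hzdef] at ex ey ez
        linear_combination (-s * (γ t 0 - γ u 0) + c * (γ t 1 - γ u 1)) * ex +
          (-(p 2 * c) * (γ t 0 - γ u 0) + -(p 2 * s) * (γ t 1 - γ u 1) + r * (γ t 2 - γ u 2)) * ey
          + (r * c * (γ t 0 - γ u 0) + r * s * (γ t 1 - γ u 1) + p 2 * (γ t 2 - γ u 2)) * ez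
      exact sub_eq_zero.1 this) hza hzb
  refine ⟨X, Y, θ, Λ, H, hΛ, fun t ht => by rw [← hz]; linarith [hz1 t ht], ?_⟩
  intro t ht u hu ν
  have := key t ht u hu (ν * norm3 (deriv γ t))
  rw [← hz, ← hz]
  convert this using 2
  · congr 3
    rw [capDefect, ← hpdef, ← hz, dx, dy]
    simp only [hxdef, hydef, det3, dot3, cross3, h0, h1, Matrix.cons_val_zero, Matrix.cons_val_one,
      Matrix.cons_val]
    linear_combination p 2 * (γ t 0 * deriv γ t 1 - γ t 1 * deriv γ t 0) * hcs
  · rw [capDefect, hdot (γ u) (γ t), hdet, dx, dy, dz]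
    simp only [hxdef, hydef, hzdef, det3, dot3, cross3, Matrix.cons_val_zero, Matrix.cons_val_one,
      Matrix.cons_val]
    ring

theorem HasDerivAt.dot3 {f g : ℝ → R3} {f' g' : R3} {s : ℝ} (hf : HasDerivAt f f' s)
    (hg : HasDerivAt g g' s) :
    HasDerivAt (fun t => dot3 (f t) (g t)) (dot3 f' (g s) + dot3 (f s) g') s := by
  rw [hasDerivAt_pi] at hf hg
  exact ((((hf 0).fun_mul (hg 0)).fun_add ((hf 1).fun_mul (hg 1))).fun_add
    ((hf 2).fun_mul (hg 2))).congr_deriv (by simp only [_root_.dot3]; ring)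

theorem Continuous.dot3 {α : Type*} [TopologicalSpace α] {f g : α → R3} (hf : Continuous f)
    (hg : Continuous g) : Continuous fun t => dot3 (f t) (g t) := by
  unfold _root_.dot3
  fun_prop

theorem Continuous.cross3 {α : Type*} [TopologicalSpace α] {f g : α → R3} (hf : Continuous f)
    (hg : Continuous g) : Continuous fun t => cross3 (f t) (g t) := by
  unfold _root_.cross3
  refine continuous_pi fun i => ?_
  fin_cases i <;> simp <;> fun_prop

theorem Continuous.norm3 {α : Type*} [TopologicalSpace α] {f : α → R3} (hf : Continuous f) :
    Continuous fun t => norm3 (f t) :=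
  (hf.dot3 hf).sqrt

theorem dot3_self_nonneg (v : R3) : 0 ≤ dot3 v v :=
  add_nonneg (add_nonneg (mul_self_nonneg _) (mul_self_nonneg _)) (mul_self_nonneg _)

theorem norm3_sq (v : R3) : norm3 v ^ 2 = dot3 v v := Real.sq_sqrt (dot3_self_nonneg v)

theorem norm3_pos {v : R3} (hv : v ≠ 0) : 0 < norm3 v :=
  Real.sqrt_pos.2 ((dot3_self_nonneg v).lt_of_ne fun h => hv (dot3_self_eq_zero.1 h.symm))

namespace IsRegularCurve

variable {γ : ℝ → R3}

theorem hasDerivAt (h : IsRegularCurve γ) (s : ℝ) : HasDerivAt γ (deriv γ s) s :=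
  (h.smooth.differentiable (by simp) s).hasDerivAt

theorem contDiff_deriv (h : IsRegularCurve γ) : ContDiff ℝ (⊤ : ℕ∞) (deriv γ) :=
  (contDiff_infty_iff_deriv.1 h.smooth).2

theorem hasDerivAt_deriv (h : IsRegularCurve γ) (s : ℝ) :
    HasDerivAt (deriv γ) (deriv (deriv γ) s) s :=
  (h.contDiff_deriv.differentiable (by simp) s).hasDerivAt

theorem continuous (h : IsRegularCurve γ) : Continuous γ := h.smooth.continuous

theorem continuous_deriv (h : IsRegularCurve γ) : Continuous (deriv γ) :=
  h.contDiff_deriv.continuous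

theorem continuous_deriv_deriv (h : IsRegularCurve γ) : Continuous (deriv (deriv γ)) :=
  (contDiff_infty_iff_deriv.1 h.contDiff_deriv).2.continuous

theorem dot3_deriv (h : IsRegularCurve γ) (s : ℝ) : dot3 (deriv γ s) (γ s) = 0 := by
  have h1 := (h.hasDerivAt s).dot3 (h.hasDerivAt s)
  rw [show (fun t => dot3 (γ t) (γ t)) = fun _ => 1 from funext h.sphere] at h1
  have := h1.unique (hasDerivAt_const s 1)
  simp only [dot3] at this ⊢
  linarith

theorem dot3_deriv_deriv (h : IsRegularCurve γ) (s : ℝ) :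
    dot3 (deriv (deriv γ) s) (γ s) = -norm3 (deriv γ s) ^ 2 := by
  have h1 := (h.hasDerivAt_deriv s).dot3 (h.hasDerivAt s)
  rw [show (fun t => dot3 (deriv γ t) (γ t)) = fun _ => 0 from funext h.dot3_deriv] at h1
  have := h1.unique (hasDerivAt_const s 0)
  rw [norm3_sq]
  linarith

theorem norm3_deriv_pos (h : IsRegularCurve γ) (s : ℝ) : 0 < norm3 (deriv γ s) :=
  norm3_pos (h.reg s)

theorem continuous_capDefect (h : IsRegularCurve γ) (ν : ℝ) :
    Continuous fun p : ℝ × ℝ => capDefect γ ν p.1 p.2 := by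
  have h1 : Continuous fun p : ℝ × ℝ => γ p.1 := h.continuous.comp continuous_fst
  have h2 : Continuous fun p : ℝ × ℝ => γ p.2 := h.continuous.comp continuous_snd
  have h3 : Continuous fun p : ℝ × ℝ => deriv γ p.1 := h.continuous_deriv.comp continuous_fst
  exact ((continuous_const.mul h3.norm3).mul (continuous_const.sub (h2.dot3 h1))).sub
    (h2.dot3 (h1.cross3 h3))

theorem hasDerivAt_capDefect (h : IsRegularCurve γ) (ν t s : ℝ) :
    HasDerivAt (capDefect γ ν t)
      (-(ν * norm3 (deriv γ t) * dot3 (deriv γ s) (γ t)) - det3 (deriv γ s) (γ t) (deriv γ t))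
      s := by
  have h1 := (h.hasDerivAt s).dot3 (hasDerivAt_const s (γ t))
  have h2 := (h.hasDerivAt s).dot3 (hasDerivAt_const s (cross3 (γ t) (deriv γ t)))
  refine (((h1.const_sub 1).const_mul (ν * norm3 (deriv γ t))).sub h2).congr_deriv ?_
  simp only [det3, dot3, Pi.zero_apply]
  ring

end IsRegularCurve

theorem capDefect_self {γ : ℝ → R3} (h : IsRegularCurve γ) (ν t : ℝ) : capDefect γ ν t t = 0 := by
  rw [capDefect, h.sphere]
  simp only [det3, dot3, cross3, Matrix.cons_val_zero, Matrix.cons_val_one, Matrix.cons_val]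
  ring

theorem pos_of_second_deriv_pos {g g' g'' : ℝ → ℝ} {t ε : ℝ} (hg : ∀ u, HasDerivAt g (g' u) u)
    (hg' : ∀ u, HasDerivAt g' (g'' u) u) (h0 : g t = 0) (h1 : g' t = 0)
    (h2 : ∀ u, |u - t| < ε → 0 < g'' u) {s : ℝ} (hs : |s - t| < ε) (hst : s ≠ t) : 0 < g s := by
  wlog hlt : t < s generalizing g g' g'' t s
  · have hgt : s < t := lt_of_le_of_ne (not_lt.1 hlt) hst
    have := this (g := fun u => g (-u)) (g' := fun u => -g' (-u)) (g'' := fun u => g'' (-u))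
      (t := -t) (s := -s) (fun u => ((hg (-u)).comp u (hasDerivAt_neg u)).congr_deriv (by ring))
      (fun u => ((hg' (-u)).comp u (hasDerivAt_neg u)).neg.congr_deriv (by ring)) (by simpa using h0)
      (by simpa using h1)
      (fun u hu => h2 (-u) (by rw [← abs_neg]; convert hu using 2; ring))
      (by rw [← abs_neg]; convert hs using 2; ring) (by simpa using hst) (by linarith)
    simpa using this
  obtain ⟨ξ, hξ, e⟩ := exists_hasDerivAt_eq_slope g g' hlt
    (fun u _ => (hg u).continuousAt.continuousWithinAt) fun u _ => hg u
  obtain ⟨η, hη, e'⟩ := exists_hasDerivAt_eq_slope g' g'' hξ.1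
    (fun u _ => (hg' u).continuousAt.continuousWithinAt) fun u _ => hg' u
  rw [abs_of_pos (sub_pos.2 hlt)] at hs
  have h3 := h2 η (by rw [abs_of_pos (sub_pos.2 hη.1)]; linarith [hη.2, hξ.2])
  rw [e', h1, sub_zero, div_pos_iff_of_pos_right (sub_pos.2 hξ.1), e, h0, sub_zero,
    div_pos_iff_of_pos_right (sub_pos.2 hlt)] at h3
  exact h3

/-- A curve of geodesic curvature less than `μ` locally stays out of its tangent caps. -/
theorem IsRegularCurve.exists_capDefect_pos {γ : ℝ → R3} (h : IsRegularCurve γ) {μ : ℝ}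
    (hκ : ∀ s, kappa γ s < μ) (a b : ℝ) :
    ∃ ε > 0, ∀ t ∈ Set.Icc a b, ∀ s, |s - t| < ε → s ≠ t → 0 < capDefect γ μ t s := by
  set G : ℝ × ℝ → ℝ := fun p => -(μ * norm3 (deriv γ p.1) * dot3 (deriv (deriv γ) p.2) (γ p.1)) -
    det3 (deriv (deriv γ) p.2) (γ p.1) (deriv γ p.1) with hG
  have hGc : Continuous G := by
    have h1 : Continuous fun p : ℝ × ℝ => γ p.1 := h.continuous.comp continuous_fst
    have h2 : Continuous fun p : ℝ × ℝ => deriv (deriv γ) p.2 :=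
      h.continuous_deriv_deriv.comp continuous_snd
    have h3 : Continuous fun p : ℝ × ℝ => deriv γ p.1 := h.continuous_deriv.comp continuous_fst
    exact ((continuous_const.mul h3.norm3).mul (h2.dot3 h1)).neg.sub (h2.dot3 (h1.cross3 h3))
  have hdiag : ∀ t, 0 < G (t, t) := fun t => by
    have hv := h.norm3_deriv_pos t
    have hk := hκ t
    rw [kappa, div_lt_iff₀ (by positivity)] at hk
    have : det3 (deriv (deriv γ) t) (γ t) (deriv γ t) =
        det3 (γ t) (deriv γ t) (deriv (deriv γ) t) := by
      simp only [det3, dot3, cross3, Matrix.cons_val_zero, Matrix.cons_val_one, Matrix.cons_val]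
      ring
    simp only [hG, this, h.dot3_deriv_deriv]
    linarith
  obtain ⟨ε, hε, hsub⟩ := (isCompact_Icc (a := a) (b := b)).image
    (f := fun t : ℝ => (t, t)) (by fun_prop) |>.exists_thickening_subset_open
    (isOpen_lt continuous_const hGc) (by rintro _ ⟨t, _, rfl⟩; exact hdiag t)
  refine ⟨ε, hε, fun t ht s hs hst => pos_of_second_deriv_pos (h.hasDerivAt_capDefect μ t)
    (g'' := fun u => G (t, u)) (fun u => ?_) (capDefect_self h μ t) ?_ (fun u hu => ?_) hs hst⟩
  · have h1 := (h.hasDerivAt_deriv u).dot3 (hasDerivAt_const u (γ t))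
    have h2 := (h.hasDerivAt_deriv u).dot3 (hasDerivAt_const u (cross3 (γ t) (deriv γ t)))
    refine ((h1.const_mul (μ * norm3 (deriv γ t))).neg.sub h2).congr_deriv ?_
    simp only [hG, det3, dot3, Pi.zero_apply]
    ring
  · rw [h.dot3_deriv]
    simp only [det3, dot3, cross3, Matrix.cons_val_zero, Matrix.cons_val_one, Matrix.cons_val]
    ring
  · refine hsub (Metric.mem_thickening_iff.2 ⟨(t, t), ⟨t, ht, rfl⟩, ?_⟩)
    rw [Prod.dist_eq]
    simpa [Real.dist_eq] using hu

theorem one_sub_dot3 {x y : R3} (hx : dot3 x x = 1) (hy : dot3 y y = 1) :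
    1 - dot3 x y = dot3 (x - y) (x - y) / 2 := by
  simp only [dot3, Pi.sub_apply] at *
  linear_combination (-1 / 2) * hx - (1 / 2) * hy

theorem one_sub_dot3_pos {x y : R3} (hx : dot3 x x = 1) (hy : dot3 y y = 1) (hxy : x ≠ y) :
    0 < 1 - dot3 x y := by
  rw [one_sub_dot3 hx hy]
  exact half_pos ((dot3_self_nonneg _).lt_of_ne fun h =>
    hxy (sub_eq_zero.1 (dot3_self_eq_zero.1 h.symm)))

theorem IsRegularCurve.capDefect_mono {γ : ℝ → R3} (h : IsRegularCurve γ) {μ ν : ℝ} (hμν : μ ≤ ν)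
    (t s : ℝ) : capDefect γ μ t s ≤ capDefect γ ν t s := by
  have h1 : 0 ≤ 1 - dot3 (γ s) (γ t) := by
    rw [one_sub_dot3 (h.sphere s) (h.sphere t)]
    exact div_nonneg (dot3_self_nonneg _) zero_le_two
  have := mul_nonneg (mul_nonneg (sub_nonneg.2 hμν) (h.norm3_deriv_pos t).le) h1
  simp only [capDefect]
  linarith

namespace IsShell

variable {γ : ℝ → R3} {a b : ℝ}

theorem ne_of_mem_Ioo (hs : IsShell γ a b) {t s : ℝ} (ht : t ∈ Set.Ioo a b)
    (hs' : s ∈ Set.Icc a b) (hst : s ≠ t) : γ s ≠ γ t := by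
  intro e
  obtain ⟨hab, hinj, hγ, -⟩ := hs
  have htI : t ∈ Set.Ico a b := ⟨ht.1.le, ht.2⟩
  rcases hs'.2.eq_or_lt with rfl | hlt
  · exact ht.1.ne (hinj ⟨le_rfl, hab⟩ htI (hγ.trans e))
  · exact hst (hinj ⟨hs'.1, hlt⟩ htI e)

/-- Shrinking the tangent `μ`-cap at `t` until it no longer contains points of the shell. -/
theorem exists_contact (hs : IsShell γ a b) (h : IsRegularCurve γ) {μ ε t : ℝ}
    (ht : t ∈ Set.Ioo a b) (hε : 0 < ε)
    (hpos : ∀ s, |s - t| < ε → s ≠ t → 0 < capDefect γ μ t s)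
    (hneg : ∃ s ∈ Set.Icc a b, capDefect γ μ t s < 0) :
    ∃ ν, μ ≤ ν ∧ (∀ s ∈ Set.Icc a b, 0 ≤ capDefect γ ν t s) ∧
      ∃ q ∈ Set.Icc a b, q ≠ t ∧ capDefect γ ν t q = 0 := by
  obtain ⟨s₀, hs₀, hlt⟩ := hneg
  have hv := h.norm3_deriv_pos t
  set K : Set ℝ := {s ∈ Set.Icc a b | ε ≤ |s - t|} with hK
  have hKne : ∀ s ∈ K, s ≠ t := by
    rintro s hsK rfl
    have := hsK.2
    rw [sub_self, abs_zero] at this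
    exact hε.not_ge this
  have hden : ∀ s ∈ K, 0 < norm3 (deriv γ t) * (1 - dot3 (γ s) (γ t)) := fun s hsK =>
    mul_pos hv (one_sub_dot3_pos (h.sphere s) (h.sphere t) (hs.ne_of_mem_Ioo ht hsK.1 (hKne s hsK)))
  have hs₀K : s₀ ∈ K := by
    refine ⟨hs₀, not_lt.1 fun hlt' => ?_⟩
    by_cases e : s₀ = t
    · rw [e, capDefect_self h] at hlt
      exact hlt.false
    · exact (hpos s₀ hlt' e).not_gt hlt
  have hKc : IsCompact K := isCompact_Icc.inter_right 
    (isClosed_le continuous_const (continuous_id.sub continuous_const).abs)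
  have hdotc : Continuous fun s => dot3 (γ s) (γ t) := h.continuous.dot3 continuous_const
  have hdetc : Continuous fun s => det3 (γ s) (γ t) (deriv γ t) :=
    h.continuous.dot3 continuous_const
  obtain ⟨q, hqK, hmax⟩ := hKc.exists_isMaxOn ⟨s₀, hs₀K⟩
    (f := fun s => det3 (γ s) (γ t) (deriv γ t) / (norm3 (deriv γ t) * (1 - dot3 (γ s) (γ t))))
    (hdetc.continuousOn.div (continuous_const.mul (continuous_const.sub hdotc)).continuousOn
      fun s hsK => (hden s hsK).ne')
  set ν := det3 (γ q) (γ t) (deriv γ t) / (norm3 (deriv γ t) * (1 - dot3 (γ q) (γ t))) with hν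
  have hle : ∀ s ∈ K, det3 (γ s) (γ t) (deriv γ t) ≤
      ν * (norm3 (deriv γ t) * (1 - dot3 (γ s) (γ t))) := fun s hsK =>
    (div_le_iff₀ (hden s hsK)).1 (hmax hsK)
  have hμν : μ ≤ ν := by
    refine le_of_lt (lt_of_mul_lt_mul_right ?_ (hden s₀ hs₀K).le)
    refine lt_of_lt_of_le ?_ (hle s₀ hs₀K)
    rw [capDefect] at hlt
    linarith
  refine ⟨ν, hμν, fun s hsI => ?_, q, hqK.1, hKne q hqK, ?_⟩
  · by_cases hd : |s - t| < ε
    · by_cases e : s = t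
      · rw [e, capDefect_self h]
      · exact (hpos s hd e).le.trans (h.capDefect_mono hμν t s)
    · have := hle s ⟨hsI, not_lt.1 hd⟩
      rw [capDefect]
      linarith
  · have := div_mul_cancel₀ (det3 (γ q) (γ t) (deriv γ t)) (hden q hqK).ne'
    rw [← hν] at this
    rw [capDefect]
    linarith

/-- Some tangent `μ`-cap contains no point of the shell. -/
theorem exists_supporting (hs : IsShell γ a b) (h : IsRegularCurve γ) {μ ε : ℝ} (hε : 0 < ε)
    (hpos : ∀ t ∈ Set.Icc a b, ∀ s, |s - t| < ε → s ≠ t → 0 < capDefect γ μ t s) :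
    ∃ t ∈ Set.Ioo a b, ∀ s ∈ Set.Icc a b, 0 ≤ capDefect γ μ t s := by
  by_contra! hcon
  obtain ⟨hab, hinj, hγ, -⟩ := id hs
  have hex : ∀ t, ∃ ν, t ∈ Set.Ioo a b → μ ≤ ν ∧ (∀ s ∈ Set.Icc a b, 0 ≤ capDefect γ ν t s) ∧
      ∃ q ∈ Set.Icc a b, q ≠ t ∧ capDefect γ ν t q = 0 := fun t => by
    by_cases ht : t ∈ Set.Ioo a b
    · obtain ⟨ν, hν⟩ := hs.exists_contact h ht hε (hpos t (Set.Ioo_subset_Icc_self ht)) (hcon t ht)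
      exact ⟨ν, fun _ => hν⟩
    · exact ⟨0, fun ht' => absurd ht' ht⟩
  choose ν hν using hex
  obtain ⟨X, Y, θ, Λ, H, hΛ, hbase, hE⟩ := h.exists_chordAngle hab hinj hγ
  have hpos' : ∀ t ∈ Set.Ioo a b, ∀ s, |s - t| < ε → s ≠ t → 0 < capDefect γ (ν t) t s :=
    fun t ht s h1 h2 => (hpos t (Set.Ioo_subset_Icc_self ht) s h1 h2).trans_le
      (h.capDefect_mono (hν t ht).1 t s)
  have hratio : ∀ t ∈ Set.Ioo a b, ∀ s ∈ Set.Ioo a b,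
      0 < (1 - dot3 (γ a) (γ t)) / (1 - dot3 (γ a) (γ s)) := fun t ht s hs' =>
    div_pos (hbase t ht) (hbase s hs')
  have ht₁ : a + min ε (b - a) / 2 ∈ Set.Ioo a b := by
    have h1 : 0 < min ε (b - a) := lt_min hε (sub_pos.2 hab)
    have h2 : min ε (b - a) ≤ b - a := min_le_right _ _
    constructor <;> linarith
  refine H.false_of_contacts
    (A := fun t => capDefect γ (ν t) t a * (1 - dot3 (γ a) (γ t)) / 2) (Λ := Λ)
    (fun t ht => div_nonneg (mul_nonneg ((hν t ht).2.1 a ⟨le_rfl, hab.le⟩) (hbase t ht).le)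
      zero_le_two) (fun t _ => hΛ t) (fun t ht s hs' => ?_) (fun t ht => ?_) hε
    (fun t ht q hq hqt h0 => ?_) ht₁ ?_
  · rw [hE t ht s hs']
    exact mul_nonneg ((hν t ht).2.1 s (Set.Ioo_subset_Icc_self hs')) (hratio t ht s hs').le
  · obtain ⟨q, hqI, hqt, hq0⟩ := (hν t ht).2.2
    have hzero : capDefect γ (ν t) t a = 0 →
        capDefect γ (ν t) t a * (1 - dot3 (γ a) (γ t)) / 2 = 0 := fun e => by simp [e]
    rcases hqI.1.eq_or_lt with rfl | haq
    · exact Or.inl (hzero hq0)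
    rcases hqI.2.eq_or_lt with rfl | hqb
    · refine Or.inl (hzero ?_)
      rw [capDefect, hγ]
      exact hq0
    · exact Or.inr ⟨q, ⟨haq, hqb⟩, hqt, by rw [hE t ht q ⟨haq, hqb⟩, hq0, zero_mul]⟩
  · rw [hE t ht q hq] at h0
    have hq0 := (mul_eq_zero.1 h0).resolve_right (hratio t ht q hq).ne'
    exact not_lt.1 fun hlt => (hpos' t ht q hlt hqt).ne' hq0
  · refine half_pos (mul_pos (hpos' _ ht₁ a ?_ ht₁.1.ne) (hbase _ ht₁))
    have h1 : 0 < min ε (b - a) := lt_min hε (sub_pos.2 hab)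
    have h2 : min ε (b - a) ≤ ε := min_le_left _ _
    rw [abs_lt]
    constructor <;> linarith

end IsShell

/-- At the corner of a positive shell, the tangent `μ`-cap contains points of the shell. -/
theorem IsPositiveShell.exists_not_supporting {γ : ℝ → R3} {a b : ℝ} (hs : IsPositiveShell γ a b)
    (h : IsRegularCurve γ) (μ : ℝ) :
    ∃ t ∈ Set.Ioo a b, ∃ s ∈ Set.Icc a b, capDefect γ μ t s < 0 := by
  obtain ⟨⟨hab, -, hγ, -⟩, hdet⟩ := hs
  have hd := h.hasDerivAt_capDefect μ a b
  have hpos : 0 < -(μ * norm3 (deriv γ a) * dot3 (deriv γ b) (γ a)) -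
      det3 (deriv γ b) (γ a) (deriv γ a) := by
    have e : det3 (deriv γ b) (γ a) (deriv γ a) = det3 (γ a) (deriv γ a) (deriv γ b) := by
      simp only [det3, dot3, cross3, Matrix.cons_val_zero, Matrix.cons_val_one, Matrix.cons_val]
      ring
    have e' : dot3 (deriv γ b) (γ a) = 0 := by rw [hγ, h.dot3_deriv]
    rw [e, e']
    linarith
  have hb : capDefect γ μ a b = 0 := by
    rw [capDefect, ← hγ]
    exact capDefect_self h μ a
  have hev : ∀ᶠ s in nhdsWithin b (Set.Iio b), capDefect γ μ a s < 0 := by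
    have h1 := (hasDerivWithinAt_iff_tendsto_slope' (s := Set.Iio b) (by simp)).1
      hd.hasDerivWithinAt
    filter_upwards [h1.eventually (lt_mem_nhds hpos), self_mem_nhdsWithin] with s hs1 hs2
    rw [slope_def_field, hb, sub_zero] at hs1
    by_contra hcon
    exact hs1.not_ge (div_nonpos_of_nonneg_of_nonpos (not_lt.1 hcon) (sub_nonpos.2 (le_of_lt hs2)))
  obtain ⟨s, hs1, hs2⟩ := (hev.and (Ioo_mem_nhdsLT hab)).exists
  have hc : Continuous fun t => capDefect γ μ t s :=
    (h.continuous_capDefect μ).comp (continuous_id.prodMk continuous_const)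
  have hev2 := (hc.tendsto a).eventually (gt_mem_nhds hs1)
  obtain ⟨t, ht1, ht2⟩ := ((hev2.filter_mono nhdsWithin_le_nhds).and (Ioo_mem_nhdsGT hab)).exists
  exact ⟨t, ht2, s, Set.Ioo_subset_Icc_self hs2, ht1⟩

/-- Some tangent `μ`-cap contains no point of the shell but touches it a second time. -/
theorem IsPositiveShell.exists_double_contact {γ : ℝ → R3} {a b : ℝ} (hs : IsPositiveShell γ a b)
    (h : IsRegularCurve γ) {μ : ℝ} (hκ : ∀ s, kappa γ s < μ) :
    ∃ t ∈ Set.Ioo a b, (∀ s ∈ Set.Icc a b, 0 ≤ capDefect γ μ t s) ∧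
      ∃ q ∈ Set.Icc a b, q ≠ t ∧ capDefect γ μ t q = 0 := by
  obtain ⟨ε, hε, hpos⟩ := h.exists_capDefect_pos hκ a b
  obtain ⟨t₀, ht₀, hsup⟩ := hs.1.exists_supporting h hε hpos
  obtain ⟨t₁, ht₁, hnot⟩ := hs.exists_not_supporting h μ
  by_contra! hcon
  have hc := h.continuous_capDefect μ
  set U : Set ℝ := {t | ∃ s ∈ Set.Icc a b, capDefect γ μ t s < 0} with hU
  set V : Set ℝ := {t | ∀ s ∈ Set.Icc a b, 0 < capDefect γ μ t s ∨ |s - t| < ε} with hV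
  have hUo : IsOpen U := by
    have : U = ⋃ s ∈ Set.Icc a b, {t | capDefect γ μ t s < 0} := by
      ext t
      simp [hU]
    rw [this]
    exact isOpen_biUnion fun s _ => isOpen_lt
      (hc.comp (continuous_id.prodMk continuous_const)) continuous_const
  have hVo : IsOpen V := by
    have hW : IsOpen {p : ℝ × ℝ | 0 < capDefect γ μ p.1 p.2 ∨ |p.2 - p.1| < ε} :=
      (isOpen_lt continuous_const hc).union 
        (isOpen_lt (continuous_snd.sub continuous_fst).abs continuous_const)
    refine isOpen_iff_mem_nhds.2 fun t ht => ?_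
    exact isCompact_Icc.eventually_forall_of_forall_eventually fun s hs' =>
      hW.mem_nhds (ht s hs')
  have hcover : ∀ t ∈ Set.Ioo a b, t ∉ U → t ∈ V := by
    intro t ht htU s hs'
    have hnn : ∀ s ∈ Set.Icc a b, 0 ≤ capDefect γ μ t s := fun s hs' =>
      not_lt.1 fun hlt => htU ⟨s, hs', hlt⟩
    by_cases e : s = t
    · exact Or.inr (by simpa [e] using hε)
    · exact Or.inl ((hnn s hs').lt_of_ne (hcon t ht hnn s hs' e).symm)
  have ht₀U : t₀ ∉ U := fun ⟨s, hs', hlt⟩ => (hsup s hs').not_gt hlt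
  obtain ⟨t, ht, ⟨s, hs', hlt⟩, htV⟩ := isPreconnected_Ioo U V hUo hVo
    (fun t ht => or_iff_not_imp_left.2 (hcover t ht)) ⟨t₁, ht₁, hnot⟩
    ⟨t₀, ht₀, hcover t₀ ht₀ ht₀U⟩
  rcases htV s hs' with h1 | h1
  · exact h1.not_gt hlt
  · by_cases e : s = t
    · rw [e, capDefect_self h] at hlt
      exact hlt.false
    · exact (hpos t (Set.Ioo_subset_Icc_self ht) s h1 e).not_gt hlt

theorem dot3_smul_left (k : ℝ) (u v : R3) : dot3 (k • u) v = k * dot3 u v := by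
  simp only [dot3, Pi.smul_apply, smul_eq_mul]
  ring

theorem dot3_add_left (u v w : R3) : dot3 (u + v) w = dot3 u w + dot3 v w := by
  simp only [dot3, Pi.add_apply]
  ring

theorem dot3_comm (u v : R3) : dot3 u v = dot3 v u := by
  simp only [dot3]
  ring

theorem ne_zero_of_dot3_pos {v o : R3} (h : 0 < dot3 v o) : v ≠ 0 := by
  rintro rfl
  simp [dot3] at h

theorem dot3_normalize3_self {v : R3} (hv : v ≠ 0) :
    dot3 (normalize3 v) (normalize3 v) = 1 := by
  have h := norm3_pos hv
  rw [normalize3, dot3_smul_left, dot3_comm, dot3_smul_left, ← norm3_sq]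
  field_simp

theorem normalize3_of_unit {v : R3} (hv : dot3 v v = 1) : normalize3 v = v := by
  rw [normalize3, norm3, hv, Real.sqrt_one, inv_one, one_smul]

theorem continuousAt_normalize3 {v : R3} (hv : v ≠ 0) : ContinuousAt normalize3 v :=
  (((continuous_id.norm3).continuousAt).inv₀ (norm3_pos hv).ne').smul continuousAt_id

theorem lt_dot3_normalize3 {v o : R3} {c : ℝ} (h0 : 0 < dot3 v o)
    (h : c ^ 2 * dot3 v v < dot3 v o ^ 2) : c < dot3 (normalize3 v) o := by
  have hv := norm3_pos (ne_zero_of_dot3_pos h0)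
  rw [normalize3, dot3_smul_left, inv_mul_eq_div, lt_div_iff₀ hv]
  refine lt_of_pow_lt_pow_left₀ 2 h0.le ?_
  rwa [mul_pow, norm3_sq]

theorem div_sqrt_one_add_sq_mem_Ioo {μ : ℝ} (hμ : 0 < μ) :
    μ / Real.sqrt (1 + μ ^ 2) ∈ Set.Ioo (0 : ℝ) 1 := by
  have hr : 0 < Real.sqrt (1 + μ ^ 2) := Real.sqrt_pos.2 (by positivity)
  exact ⟨div_pos hμ hr, (div_lt_one hr).2 (Real.lt_sqrt_of_sq_lt (by linarith))⟩

theorem isPreconnected_muDisk {μ : ℝ} (hμ : 0 < μ) (o : R3) : IsPreconnected (muDisk μ o) := by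
  set c := μ / Real.sqrt (1 + μ ^ 2) with hc
  have hc0 : 0 < c := (div_sqrt_one_add_sq_mem_Ioo hμ).1
  set S : Set R3 := {v | dot3 v v ≤ 1 ∧ c < dot3 v o} with hS
  have hconv : Convex ℝ S := by
    rintro u ⟨hu, hu'⟩ w ⟨hw, hw'⟩ α β hα hβ hαβ
    constructor
    · have h1 := dot3_self_nonneg (u - w)
      have h2 : dot3 (α • u + β • w) (α • u + β • w) =
          (α + β) * (α * dot3 u u + β * dot3 w w) - α * β * dot3 (u - w) (u - w) := by
        simp only [dot3, Pi.add_apply, Pi.smul_apply, Pi.sub_apply, smul_eq_mul]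
        ring
      rw [h2, hαβ]
      nlinarith [mul_nonneg (mul_nonneg hα hβ) h1, mul_nonneg hα (sub_nonneg.2 hu),
        mul_nonneg hβ (sub_nonneg.2 hw)]
    · rw [dot3_add_left, dot3_smul_left, dot3_smul_left]
      exact (convex_Ioi c) hu' hw' hα hβ hαβ
  have himage : normalize3 '' S = muDisk μ o := by
    ext x
    constructor
    · rintro ⟨v, ⟨hv, hv'⟩, rfl⟩
      have h0 := hc0.trans hv'
      refine ⟨dot3_normalize3_self (ne_zero_of_dot3_pos h0), lt_dot3_normalize3 h0 ?_⟩
      calc c ^ 2 * dot3 v v ≤ c ^ 2 * 1 := by gcongr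
        _ < dot3 v o ^ 2 := by rw [mul_one]; gcongr
    · rintro ⟨hx, hx'⟩
      exact ⟨x, ⟨hx.le, hx'⟩, normalize3_of_unit hx⟩
  rw [← himage]
  exact hconv.isPreconnected.image _ fun v hv =>
    (continuousAt_normalize3 (ne_zero_of_dot3_pos (hc0.trans hv.2))).continuousWithinAt

theorem muCircle_subset_closure_muDisk {μ : ℝ} (hμ : 0 < μ) {o : R3} (ho : dot3 o o = 1) :
    muCircle μ o ⊆ closure (muDisk μ o) := by
  rintro x ⟨hx, hxo⟩
  obtain ⟨hc0, hc1⟩ := div_sqrt_one_add_sq_mem_Ioo hμ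
  set c := μ / Real.sqrt (1 + μ ^ 2) with hc
  have hx0 : x ≠ 0 := ne_zero_of_dot3_pos (hx.symm ▸ one_pos)
  have hlim : Filter.Tendsto (fun δ : ℝ => normalize3 (x + δ • o)) (nhdsWithin 0 (Set.Ioi 0))
      (nhds x) := by
    have h1 : ContinuousAt (fun δ : ℝ => normalize3 (x + δ • o)) 0 :=
      ContinuousAt.comp (g := normalize3) (by simpa using continuousAt_normalize3 hx0)
        (by fun_prop)
    have h2 := h1.tendsto
    simp only [zero_smul, add_zero, normalize3_of_unit hx] at h2
    exact h2.mono_left nhdsWithin_le_nhds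
  refine mem_closure_of_tendsto hlim ?_
  filter_upwards [self_mem_nhdsWithin] with δ hδ
  have hδ : 0 < δ := hδ
  have e1 : dot3 (x + δ • o) o = c + δ := by rw [dot3_add_left, dot3_smul_left, hxo, ho, mul_one]
  have e2 : dot3 (x + δ • o) (x + δ • o) = 1 + 2 * c * δ + δ ^ 2 := by
    rw [dot3_add_left, dot3_smul_left, dot3_comm x, dot3_comm o, e1, dot3_add_left, dot3_smul_left,
      hx, dot3_comm o, hxo]
    ring
  have h0 : 0 < dot3 (x + δ • o) o := by rw [e1]; positivity
  refine ⟨dot3_normalize3_self (ne_zero_of_dot3_pos h0), lt_dot3_normalize3 h0 ?_⟩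
  rw [e1, e2]
  have hc2 : 0 < 1 - c ^ 2 := by nlinarith
  nlinarith [mul_pos hc2 (mul_pos hc0 hδ), mul_pos hc2 (mul_pos hδ hδ)]

namespace IsRegularCurve

variable {γ : ℝ → R3}

theorem dot3_unitNormal_self (h : IsRegularCurve γ) (t : ℝ) :
    dot3 (unitNormal γ t) (unitNormal γ t) = 1 := by
  have hv := h.norm3_deriv_pos t
  have hc : dot3 (cross3 (γ t) (deriv γ t)) (cross3 (γ t) (deriv γ t)) = norm3 (deriv γ t) ^ 2 := by
    have h1 := h.sphere t
    have h2 := h.dot3_deriv t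
    rw [norm3_sq]
    simp only [dot3, cross3, Matrix.cons_val_zero, Matrix.cons_val_one, Matrix.cons_val] at *
    linear_combination (deriv γ t 0 * deriv γ t 0 + deriv γ t 1 * deriv γ t 1 +
      deriv γ t 2 * deriv γ t 2) * h1 - (deriv γ t 0 * γ t 0 + deriv γ t 1 * γ t 1 +
      deriv γ t 2 * γ t 2) * h2
  rw [unitNormal, dot3_smul_left, dot3_comm, dot3_smul_left, hc]
  field_simp

theorem dot3_unitNormal (t : ℝ) : dot3 (unitNormal γ t) (γ t) = 0 := by
  rw [unitNormal, dot3_smul_left]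
  simp only [dot3, cross3, Matrix.cons_val_zero, Matrix.cons_val_one, Matrix.cons_val]
  ring

theorem capDefect_eq (h : IsRegularCurve γ) (μ t s : ℝ) : capDefect γ μ t s =
    norm3 (deriv γ t) * (μ - Real.sqrt (1 + μ ^ 2) * dot3 (γ s) (tangentCenter μ γ t)) := by
  have hv := h.norm3_deriv_pos t
  have hr : 0 < Real.sqrt (1 + μ ^ 2) := Real.sqrt_pos.2 (by positivity)
  rw [tangentCenter, unitNormal, dot3_comm, dot3_smul_left, dot3_add_left, dot3_smul_left,
    dot3_smul_left, dot3_comm _ (γ s), dot3_comm _ (γ s), capDefect, det3]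
  field_simp
  ring

theorem dot3_tangentCenter_self (h : IsRegularCurve γ) (μ t : ℝ) :
    dot3 (tangentCenter μ γ t) (tangentCenter μ γ t) = 1 := by
  have hr : 0 < Real.sqrt (1 + μ ^ 2) := Real.sqrt_pos.2 (by positivity)
  have e : dot3 (μ • γ t + unitNormal γ t) (μ • γ t + unitNormal γ t) =
      Real.sqrt (1 + μ ^ 2) ^ 2 := by
    rw [Real.sq_sqrt (by positivity), dot3_add_left, dot3_smul_left, dot3_comm (γ t),
      dot3_comm (unitNormal γ t), dot3_add_left, dot3_add_left, dot3_smul_left, dot3_smul_left,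
      h.sphere, dot3_unitNormal, h.dot3_unitNormal_self, dot3_comm, dot3_unitNormal]
    ring
  rw [tangentCenter, dot3_smul_left, dot3_comm, dot3_smul_left, e]
  field_simp

theorem mem_muCircle_of_capDefect_eq_zero (h : IsRegularCurve γ) {μ t s : ℝ}
    (h0 : capDefect γ μ t s = 0) : γ s ∈ muCircle μ (tangentCenter μ γ t) := by
  have hr : 0 < Real.sqrt (1 + μ ^ 2) := Real.sqrt_pos.2 (by positivity)
  rw [h.capDefect_eq, mul_eq_zero, or_iff_right (h.norm3_deriv_pos t).ne'] at h0
  refine ⟨h.sphere s, ?_⟩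
  rw [eq_div_iff hr.ne']
  linarith

theorem notMem_muDisk_of_capDefect_nonneg (h : IsRegularCurve γ) {μ t s : ℝ}
    (h0 : 0 ≤ capDefect γ μ t s) : γ s ∉ muDisk μ (tangentCenter μ γ t) := by
  have hr : 0 < Real.sqrt (1 + μ ^ 2) := Real.sqrt_pos.2 (by positivity)
  rw [h.capDefect_eq, mul_nonneg_iff_of_pos_left (h.norm3_deriv_pos t)] at h0
  rintro ⟨-, hlt⟩
  rw [div_lt_iff₀ hr] at hlt
  linarith

theorem normalize3_push_mem_muDisk (h : IsRegularCurve γ) {μ δ : ℝ} (hμ : 0 < μ) (hδ : 0 < δ)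
    (hδμ : δ * μ < 2) (t : ℝ) :
    normalize3 (γ t + δ • unitNormal γ t) ∈ muDisk μ (tangentCenter μ γ t) := by
  have hr : 0 < Real.sqrt (1 + μ ^ 2) := Real.sqrt_pos.2 (by positivity)
  set w := γ t + δ • unitNormal γ t with hw
  have e1 : dot3 w (γ t) = 1 := by
    rw [hw, dot3_add_left, dot3_smul_left, h.sphere, dot3_unitNormal, mul_zero, add_zero]
  have e2 : dot3 w (unitNormal γ t) = δ := by
    rw [hw, dot3_add_left, dot3_smul_left, dot3_comm, dot3_unitNormal, h.dot3_unitNormal_self,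
      mul_one, zero_add]
  have e3 : dot3 w (tangentCenter μ γ t) = (μ + δ) / Real.sqrt (1 + μ ^ 2) := by
    rw [tangentCenter, dot3_comm, dot3_smul_left, dot3_add_left, dot3_smul_left, dot3_comm (γ t),
      dot3_comm (unitNormal γ t), e1, e2]
    field_simp
  have e4 : dot3 w w = 1 + δ ^ 2 := by
    nth_rw 1 [hw]
    rw [dot3_add_left, dot3_smul_left, dot3_comm (γ t), dot3_comm (unitNormal γ t), e1, e2]
    ring
  have h0 : 0 < dot3 w (tangentCenter μ γ t) := by rw [e3]; positivity
  refine ⟨dot3_normalize3_self (ne_zero_of_dot3_pos h0), lt_dot3_normalize3 h0 ?_⟩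
  rw [e3, e4, div_pow, div_pow, div_mul_eq_mul_div]
  gcongr
  nlinarith [mul_pos (mul_pos hμ hδ) (sub_pos.2 hδμ), mul_pos hδ hδ]

theorem muDisk_subset_interiorDomain (h : IsRegularCurve γ) {a b μ t : ℝ} {Δ : Set R3}
    (hμ : 0 < μ) (hΔ : IsInteriorDomain γ a b 1 Δ) (ht : t ∈ Set.Ioo a b)
    (hsup : ∀ s ∈ Set.Icc a b, 0 ≤ capDefect γ μ t s) : muDisk μ (tangentCenter μ γ t) ⊆ Δ := by
  obtain ⟨⟨p, -, rfl⟩, hpush⟩ := hΔ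
  obtain ⟨ε, hε, hmem⟩ := hpush t ht
  have hδ : 0 < min (ε / 2) (1 / μ) := by positivity
  have hm := hmem (min (ε / 2) (1 / μ)) ⟨hδ, (min_le_left _ _).trans_lt (half_lt_self hε)⟩
  rw [one_mul] at hm
  have hδμ : min (ε / 2) (1 / μ) * μ < 2 := by
    have := (le_div_iff₀ hμ).1 (min_le_right (ε / 2) (1 / μ))
    linarith
  rw [connectedComponentIn_eq hm]
  refine (isPreconnected_muDisk hμ _).subset_connectedComponentIn
    (h.normalize3_push_mem_muDisk hμ hδ hδμ t) fun x hx => ⟨hx.1, ?_⟩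
  rintro ⟨s, hs, rfl⟩
  exact h.notMem_muDisk_of_capDefect_nonneg (hsup s hs) hx

end IsRegularCurve

theorem stmt7 (μ : ℝ) (γ2 : ℝ → R3) (l a2 b2 : ℝ) (Δ : Set R3)
    (hμ : 0 < μ) (hreg : IsRegularCurve γ2) (hper : HasPeriod γ2 l)
    (hκ : ∀ s, kappa γ2 s < μ) (hint : b2 - a2 < l)
    (hshell : IsPositiveShell γ2 a2 b2)
    (hΔ : IsInteriorDomain γ2 a2 b2 1 Δ) :
    ∃ o : R3, dot3 o o = 1 ∧ muCircle μ o ⊆ closure Δ ∧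
      ∃ P Q : R3, P ≠ Q ∧ P ∈ muCircle μ o ∩ γ2 '' Set.Icc a2 b2 ∧
        Q ∈ muCircle μ o ∩ γ2 '' Set.Icc a2 b2 := by
  obtain ⟨t, ht, hsup, q, hq, hqt, hq0⟩ := hshell.exists_double_contact hreg hκ
  refine ⟨tangentCenter μ γ2 t, hreg.dot3_tangentCenter_self μ t,
    (muCircle_subset_closure_muDisk hμ (hreg.dot3_tangentCenter_self μ t)).trans
      (closure_mono (hreg.muDisk_subset_interiorDomain hμ hΔ ht hsup)),
    γ2 q, γ2 t, hshell.1.ne_of_mem_Ioo ht hq hqt,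
    ⟨hreg.mem_muCircle_of_capDefect_eq_zero hq0, q, hq, rfl⟩,
    hreg.mem_muCircle_of_capDefect_eq_zero (capDefect_self hreg μ t), t,
    Set.Ioo_subset_Icc_self ht, rfl⟩
end
end
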